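/- Let m, k, n, p be positive integers and ρ*, η₂, η₃, ε₁, ε₂, ε₃, ε₄ positive constants such that ε₁+ε₂ < 1, ε₃+ε₄ = ε₂²/8, s₀+m+k+1 ≤ min(p+1, ε₁²n/2), and log(binom(p−s₀, m+k)) ≤ ε₃n. Set τ* = (1−ε₁−ε₂)² and τ° = (1+ε₁+ε₂)². Then the event Ω_iso = {τ* ≤ ‖X(t)u‖₂²/n ≤ τ° for all t > 0 and all u ∈ ℝ^p with ‖Σ^{1/2}u‖₂ = 1 and |supp(u)∖S| ≤ m+k} satisfies P(Ω_iso) ≥ 1 − 3e^{−nε₄}. -/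

import Mathlib

/-!
Write `X = G A` with `AᵀA = Σ` and `G` a matrix of independent standard Gaussian entries, and put `w = A u`,
a unit vector. In these coordinates the direction `a₀` becomes a unit vector `v`, and
`X(t) u = G w + P ((cos t - 1) a G v + (sin t) a g')` with `a = ⟨v, w⟩`, `P` the projection orthogonal
to the noise and `g'` standard Gaussian. For a fixed noise vector this is a Gaussian process indexed by `(t, u)`,
each of whose values is a standard Gaussian vector in `ℝⁿ` (`path_eq`, `alphaOf_cov`).

Its covariances are comparable with those of Gordon's process `h` plus `⟨γ, τ⟩`, where `h` and `γ`
are independent standard Gaussian vectors and `τ = (w + (cos t - 1) a v, a sin t)`. This `τ` is a unit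
vector, and when `u` is supported in `B` it lives in a space of dimension at most `|B| + 2`. The
comparison needs `a ≥ 0`, which costs nothing since `u` and `-u` give the same norm (`gordonPair_path`).

A comparison theorem of Slepian–Gordon type (`gauss_comparison`), proved by interpolation and Gaussian
integration by parts (`gauss_ibp`), is applied to products of smooth functions of `‖V‖ + r`, where `r` is an
extra common Gaussian coordinate. Conditioning on the sign of that coordinate costs a factor two
(`half_trick`), and bounds the probability that some `‖X(t) u‖` is large or small by twice a tail
probability of `‖h‖ + ‖γ‖` or `‖h‖ - ‖γ‖` (`gordon_upper`, `gordon_lower`). Chernoff bounds for chi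
variables (`tail_upper`, `tail_lower`) and a numerical estimate (`numeric_bound`) give a failure
probability of at most `3 exp (-n ε₂² / 8)` for each fixed `B` (`gordon_both`, `path_seq`).

A dense sequence of parameters and Fubini in the noise (`exists_bad`, `law_bound`) make this uniform in
`(t, u)` and unconditional. A union bound over the at most `exp (ε₃ n)` sets `B = S ∪ T` with `|T| = m + k`
yields the claim.
-/

open MeasureTheory ProbabilityTheory Filter
open scoped ENNReal NNReal

noncomputable section

namespace BZ

/-- Euclidean (ℓ2) norm of a finite real vector. -/
def l2 {m : ℕ} (v : Fin m → ℝ) : ℝ := Real.sqrt (∑ i, (v i) ^ 2)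

/-- ℓ1 norm. -/
def l1 {m : ℕ} (v : Fin m → ℝ) : ℝ := ∑ i, |v i|

/-- Euclidean inner product. -/
def dot {m : ℕ} (a b : Fin m → ℝ) : ℝ := ∑ i, a i * b i

/-- Support of a vector, as a finset. -/
def suppF {m : ℕ} (v : Fin m → ℝ) : Finset (Fin m) := Finset.univ.filter fun i => v i ≠ 0

/-- ℓ0 "norm": number of nonzero coordinates. -/
def l0 {m : ℕ} (v : Fin m → ℝ) : ℕ := (suppF v).card

/-- ℓ∞ norm. -/
def linf {m : ℕ} (v : Fin m → ℝ) : ℝ := sSup (Set.range fun i => |v i|)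

/-- Sign function. -/
def sgn (x : ℝ) : ℝ := if 0 < x then 1 else if x < 0 then -1 else 0

/-- Matrix (given as a function) times a vector. -/
def mulVec' {n p : ℕ} (X : Fin n → Fin p → ℝ) (b : Fin p → ℝ) : Fin n → ℝ :=
  fun i => ∑ j, X i j * b j

/-- Transposed matrix times a vector: `Xᵀ r`. -/
def tmulVec {n p : ℕ} (X : Fin n → Fin p → ℝ) (r : Fin n → ℝ) : Fin p → ℝ :=
  fun j => ∑ i, X i j * r i

/-- Gram matrix `XᵀX`. -/
def gramOf {n p : ℕ} (X : Fin n → Fin p → ℝ) : Matrix (Fin p) (Fin p) ℝ :=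
  Matrix.of fun j k => ∑ i, X i j * X i k

/-- The Lasso objective `‖y - Xb‖₂²/(2n) + λ‖b‖₁`. -/
def lassoObj {n p : ℕ} (y : Fin n → ℝ) (X : Fin n → Fin p → ℝ) (lam : ℝ) (b : Fin p → ℝ) : ℝ :=
  (l2 (fun i => y i - mulVec' X b i)) ^ 2 / (2 * n) + lam * l1 b

/-- `bhat` is a Lasso solution. -/
def IsLasso {n p : ℕ} (y : Fin n → ℝ) (X : Fin n → Fin p → ℝ) (lam : ℝ) (bhat : Fin p → ℝ) :
    Prop :=
  ∀ b : Fin p → ℝ, lassoObj y X lam bhat ≤ lassoObj y X lam b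

/-- Quadratic form `vᵀ M v`. -/
def quadForm {m : ℕ} (M : Matrix (Fin m) (Fin m) ℝ) (v : Fin m → ℝ) : ℝ :=
  ∑ i, ∑ j, v i * M i j * v j

/-- Principal submatrix `M_{A,A}` indexed by a finset `A`. -/
def subMat {m : ℕ} (M : Matrix (Fin m) (Fin m) ℝ) (A : Finset (Fin m)) :
    Matrix {x // x ∈ A} {x // x ∈ A} ℝ := Matrix.of fun i j => M i.1 j.1

/-- Bilinear form `(u_A)ᵀ (M_{A,A})⁻¹ v_A`. -/
def subBilinInv {m : ℕ} (M : Matrix (Fin m) (Fin m) ℝ) (A : Finset (Fin m)) (u v : Fin m → ℝ) :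
    ℝ :=
  ∑ i : {x // x ∈ A}, ∑ j : {x // x ∈ A}, u i.1 * (subMat M A)⁻¹ i j * v j.1

/-- Smallest eigenvalue of `M_{A,A}` (Rayleigh quotient formulation). -/
def rayleighMin {m : ℕ} (M : Matrix (Fin m) (Fin m) ℝ) (A : Finset (Fin m)) : ℝ :=
  sInf {c | ∃ v : Fin m → ℝ, (∀ j ∉ A, v j = 0) ∧ l2 v = 1 ∧ c = quadForm M v}

/-- Largest eigenvalue of `M_{A,A}` (Rayleigh quotient formulation). -/
def rayleighMax {m : ℕ} (M : Matrix (Fin m) (Fin m) ℝ) (A : Finset (Fin m)) : ℝ :=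
  sSup {c | ∃ v : Fin m → ℝ, (∀ j ∉ A, v j = 0) ∧ l2 v = 1 ∧ c = quadForm M v}

/-- Sparse minimal eigenvalue `φ_min(m, B; M)`. -/
def phiMin {m : ℕ} (mm : ℕ) (B : Finset (Fin m)) (M : Matrix (Fin m) (Fin m) ℝ) : ℝ :=
  sInf {c | ∃ A : Finset (Fin m), (A \ B).card = mm ∧ c = rayleighMin M A}

/-- Sparse maximal eigenvalue `φ_max(m, B; M)`. -/
def phiMax {m : ℕ} (mm : ℕ) (B : Finset (Fin m)) (M : Matrix (Fin m) (Fin m) ℝ) : ℝ :=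
  sSup {c | ∃ A : Finset (Fin m), (A \ B).card = mm ∧ c = rayleighMax M A}

/-- Sparse condition number `φ_cond(m; B, M)`. -/
def phiCond {m : ℕ} (mm : ℕ) (B : Finset (Fin m)) (M : Matrix (Fin m) (Fin m) ℝ) : ℝ :=
  sSup {c | ∃ A : Finset (Fin m), (A \ B).card ≤ max 1 mm ∧ c = rayleighMax M A / rayleighMin M A}

/-- Operator (spectral) norm of a square matrix. -/
def opNormM {m : ℕ} (M : Matrix (Fin m) (Fin m) ℝ) : ℝ :=
  sSup {c | ∃ v : Fin m → ℝ, l2 v = 1 ∧ c = l2 (M.mulVec v)}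

/-- Operator norm of a rectangular matrix given as a function. -/
def opNormF {n p : ℕ} (M : Fin n → Fin p → ℝ) : ℝ :=
  sSup {c | ∃ v : Fin p → ℝ, l2 v = 1 ∧ c = l2 (mulVec' M v)}

section Prob

variable {Ω : Type*} [MeasureSpace Ω]

/-- `W n = O_P(a n)`. -/
def BigOP (W : ℕ → Ω → ℝ) (a : ℕ → ℝ) : Prop :=
  ∀ γ : ℝ, 0 < γ → ∃ K : ℝ, ∃ N : ℕ, ∀ n, N ≤ n →
    (volume {ω | K * a n < |W n ω|}).toReal ≤ γ

/-- `W n = o_P(1)`. -/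
def LittleOP (W : ℕ → Ω → ℝ) : Prop :=
  ∀ δ : ℝ, 0 < δ → Tendsto (fun n => (volume {ω | δ < |W n ω|}).toReal) atTop (nhds 0)

/-- `W n` is stochastically unbounded. -/
def StochUnbounded (W : ℕ → Ω → ℝ) : Prop :=
  ¬ ∀ γ : ℝ, 0 < γ → ∃ M : ℝ,
      Filter.limsup (fun n => (volume {ω | M < |W n ω|}).toReal) atTop ≤ γ

/-- Convergence in distribution to the standard normal law (via CDFs). -/
def TendstoNormal (Z : ℕ → Ω → ℝ) : Prop :=
  ∀ t : ℝ, Tendsto (fun n => (volume {ω | Z n ω ≤ t}).toReal) atTop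
    (nhds ((gaussianReal 0 1 (Set.Iic t)).toReal))

/-- `e : Ω → ℝⁿ` is a centered Gaussian vector with covariance `v · I_n`. -/
def IsoGaussVec (nn : ℕ) (v : ℝ) (e : Ω → Fin nn → ℝ) : Prop :=
  Measurable e ∧
    Measure.map e volume = Measure.pi (fun _ : Fin nn => gaussianReal 0 (Real.toNNReal v))

/-- Gaussian noise `N(0, σ² I_n)`. -/
def GaussNoise (nn : ℕ) (σ : ℝ) (e : Ω → Fin nn → ℝ) : Prop := IsoGaussVec nn (σ ^ 2) e

/-- Design matrix with i.i.d. `N(0, Sig)` rows. -/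
def GaussDesign (nn pp : ℕ) (Sig : Matrix (Fin pp) (Fin pp) ℝ)
    (X : Ω → Fin nn → Fin pp → ℝ) : Prop :=
  Measurable X ∧ ∃ A : Matrix (Fin pp) (Fin pp) ℝ, A.transpose * A = Sig ∧
    Measure.map X volume =
      Measure.map (fun (G : Fin nn → Fin pp → ℝ) (i : Fin nn) (j : Fin pp) => ∑ l, G i l * A l j)
        (Measure.pi fun _ : Fin nn => Measure.pi fun _ : Fin pp => gaussianReal 0 1)

end Prob

/-- `⟨a₀, Σ⁻¹ a₀⟩`. -/
def quadA0 {p : ℕ} (Sig : Matrix (Fin p) (Fin p) ℝ) (a0 : Fin p → ℝ) : ℝ :=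
  dot a0 (Matrix.mulVec Sig⁻¹ a0)

/-- `C₀ = ‖Σ^{-1/2} a₀‖₂`. -/
def C0 {p : ℕ} (Sig : Matrix (Fin p) (Fin p) ℝ) (a0 : Fin p → ℝ) : ℝ :=
  Real.sqrt (quadA0 Sig a0)

/-- Fisher information `F_θ = 1/(σ² ⟨a₀, Σ⁻¹ a₀⟩)`. -/
def Fisher {p : ℕ} (σ : ℝ) (Sig : Matrix (Fin p) (Fin p) ℝ) (a0 : Fin p → ℝ) : ℝ :=
  1 / (σ ^ 2 * quadA0 Sig a0)

/-- Least favorable direction `u₀ = Σ⁻¹a₀/⟨a₀,Σ⁻¹a₀⟩`. -/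
def u0vec {p : ℕ} (Sig : Matrix (Fin p) (Fin p) ℝ) (a0 : Fin p → ℝ) : Fin p → ℝ :=
  fun j => Matrix.mulVec Sig⁻¹ a0 j / quadA0 Sig a0

/-- Ideal score vector `z₀ = X u₀`. -/
def z0vec {n p : ℕ} (X : Fin n → Fin p → ℝ) (Sig : Matrix (Fin p) (Fin p) ℝ)
    (a0 : Fin p → ℝ) : Fin n → ℝ := mulVec' X (u0vec Sig a0)

/-- Residual vector `y - X bhat` where `y = Xβ + ε`. -/
def residOf {n p : ℕ} (X : Fin n → Fin p → ℝ) (e : Fin n → ℝ) (β bhat : Fin p → ℝ) :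
    Fin n → ℝ := fun i => mulVec' X β i + e i - mulVec' X bhat i

/-- Degrees-of-freedom adjusted LDPE. -/
def thetaHat {p : ℕ} (nn : ℕ) (a0 bhat : Fin p → ℝ) (z0 r : Fin nn → ℝ) (ν : ℝ) : ℝ :=
  dot a0 bhat + dot z0 r / ((l2 z0) ^ 2 * (1 - ν / nn))

/-- De-biased estimate based on an estimated score vector `zhat`. -/
def thetaHatZ {p : ℕ} (nn : ℕ) (a0 bhat : Fin p → ℝ) (zhat z r : Fin nn → ℝ) (ν : ℝ) : ℝ :=
  dot a0 bhat + dot zhat r / ((1 - ν / nn) * dot zhat z)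

/-- `T_n = √(n F_θ) ⟨z₀, ε⟩ / ‖z₀‖₂²`. -/
def Tstat (nn : ℕ) (F : ℝ) (z0 e : Fin nn → ℝ) : ℝ :=
  Real.sqrt (nn * F) * dot z0 e / (l2 z0) ^ 2

/-- `√(n F_θ)(1 - ν/n)(θ̂_ν - θ)`. -/
def pivot {p : ℕ} (n : ℕ) (σ : ℝ) (Sig : Matrix (Fin p) (Fin p) ℝ) (a0 β bhat : Fin p → ℝ)
    (Xω : Fin n → Fin p → ℝ) (eω : Fin n → ℝ) (ν : ℝ) : ℝ :=
  Real.sqrt ((n : ℝ) * Fisher σ Sig a0) * (1 - ν / n) *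
    (thetaHat n a0 bhat (z0vec Xω Sig a0) (residOf Xω eω β bhat) ν - dot a0 β)

/-- The statistic `T_n` of the model. -/
def TofModel {p : ℕ} (n : ℕ) (σ : ℝ) (Sig : Matrix (Fin p) (Fin p) ℝ) (a0 : Fin p → ℝ)
    (Xω : Fin n → Fin p → ℝ) (eω : Fin n → ℝ) : ℝ :=
  Tstat n (Fisher σ Sig a0) (z0vec Xω Sig a0) eω

/-- `λ₀ = √((2/n) log(8p/k))`. -/
def lam0 (nn pp kk : ℕ) : ℝ := Real.sqrt ((2 / (nn : ℝ)) * Real.log (8 * (pp : ℝ) / kk))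

/-- `λ_univ = √((2/n) log p)`. -/
def lamUniv (nn pp : ℕ) : ℝ := Real.sqrt ((2 / (nn : ℝ)) * Real.log (pp : ℝ))

def tauStar (e1 e2 : ℝ) : ℝ := (1 - e1 - e2) ^ 2
def tauUp (e1 e2 : ℝ) : ℝ := (1 + e1 + e2) ^ 2

/-- Projection of `v` onto the span of `e`. -/
def projOn {n : ℕ} (e v : Fin n → ℝ) : Fin n → ℝ := fun i => (dot e v / (l2 e) ^ 2) * e i

/-- Projection of `v` onto the orthogonal complement of `e`. -/
def projPerp {n : ℕ} (e v : Fin n → ℝ) : Fin n → ℝ := fun i => v i - projOn e v i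

/-- The interpolation path `z₀(t)`. -/
def z0Path {n : ℕ} (e z0 g : Fin n → ℝ) (t : ℝ) : Fin n → ℝ :=
  fun i => projOn e z0 i + Real.cos t * projPerp e z0 i + Real.sin t * projPerp e g i

/-- `ż₀(t)`. -/
def zdotPath {n : ℕ} (e z0 g : Fin n → ℝ) (t : ℝ) : Fin n → ℝ :=
  fun i => -Real.sin t * projPerp e z0 i + Real.cos t * projPerp e g i

/-- The interpolated design `X(t) = XQ₀ + z₀(t)a₀ᵀ`. -/
def XPath {n p : ℕ} (X : Fin n → Fin p → ℝ) (Sig : Matrix (Fin p) (Fin p) ℝ) (a0 : Fin p → ℝ)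
    (e g : Fin n → ℝ) (t : ℝ) : Fin n → Fin p → ℝ :=
  fun i j => (X i j - z0vec X Sig a0 i * a0 j) + z0Path e (z0vec X Sig a0) g t i * a0 j

/-- Assumption M. -/
structure AssumptionM (nn pp mm kk : ℕ) (ρs η2 η3 e1 e2 e3 e4 σ lam : ℝ)
    (Sig : Matrix (Fin pp) (Fin pp) ℝ) (S : Finset (Fin pp)) : Prop where
  hn : 0 < nn
  hp : 0 < pp
  hm : 0 < mm
  hk : 0 < kk
  hρ : 0 < ρs
  hη2 : η2 ∈ Set.Ioo (0 : ℝ) 1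
  hη3 : η3 ∈ Set.Ioo (0 : ℝ) 1
  he1 : 0 < e1
  he2 : 0 < e2
  he3 : 0 < e3
  he4 : 0 < e4
  hσ : 0 < σ
  hdiag : ∀ j, Sig j j ≤ 1
  hlam : lam = η2⁻¹ * (1 + η3) * σ * lam0 nn pp kk
  hSRC : ((S.card : ℝ) + kk) <
      (1 - η2) ^ 2 * (2 * mm) /
        ((1 + η2) ^ 2 * ((tauUp e1 e2 / tauStar e1 e2) * phiCond (mm + kk) S Sig - 1))
  hphimin : ρs ≤ phiMin (mm + kk) S Sig
  hlam0s : lam0 nn pp kk * Real.sqrt ((S.card : ℝ) + mm + kk) ≤ 1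
  hrank : 2 * (mm + kk) + S.card + 1 ≤ min (nn - 1) (pp + 1)
  he12 : e1 + e2 < 1
  he34 : e3 + e4 = e2 ^ 2 / 8
  hsize1 : S.card + mm + kk + 1 ≤ pp + 1
  hsize2 : ((S.card + mm + kk + 1 : ℕ) : ℝ) ≤ e1 ^ 2 * nn / 2
  hbinom : Real.log (Nat.choose (pp - S.card) (mm + kk)) ≤ e3 * nn

/-- The unknown-Σ construction: `u = e_{j₀}/(a₀)_{j₀}`. -/
def uvecOf {p : ℕ} (a0 : Fin p → ℝ) (j0 : Fin p) : Fin p → ℝ :=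
  fun j => if j = j0 then (a0 j0)⁻¹ else 0

/-- `Qb = b - u ⟨a₀, b⟩` where `Q = I - u a₀ᵀ`. -/
def Qvec {p : ℕ} (a0 : Fin p → ℝ) (j0 : Fin p) (b : Fin p → ℝ) : Fin p → ℝ :=
  fun j => b j - uvecOf a0 j0 j * dot a0 b

/-- `XQ`. -/
def XQmat {n p : ℕ} (X : Fin n → Fin p → ℝ) (a0 : Fin p → ℝ) (j0 : Fin p) :
    Fin n → Fin p → ℝ :=
  fun i j => X i j - mulVec' X (uvecOf a0 j0) i * a0 j

/-- `z = Xu`. -/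
def zOf {n p : ℕ} (X : Fin n → Fin p → ℝ) (a0 : Fin p → ℝ) (j0 : Fin p) : Fin n → ℝ :=
  mulVec' X (uvecOf a0 j0)

/-- `γ = -Q u₀`. -/
def gammaOf {p : ℕ} (Sig : Matrix (Fin p) (Fin p) ℝ) (a0 : Fin p → ℝ) (j0 : Fin p) :
    Fin p → ℝ :=
  fun j => -(Qvec a0 j0 (u0vec Sig a0) j)

/-- Estimated score vector `ẑ = z - XQ γ̂`. -/
def zhatOf {n p : ℕ} (X : Fin n → Fin p → ℝ) (a0 : Fin p → ℝ) (j0 : Fin p)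
    (ghat : Fin p → ℝ) : Fin n → ℝ :=
  fun i => zOf X a0 j0 i - mulVec' (XQmat X a0 j0) ghat i

section Events

variable {Ω : Type*}

/-- The event `Ω₁`. -/
def OmegaOne {n p : ℕ} (X : Ω → Fin n → Fin p → ℝ) (Sig : Matrix (Fin p) (Fin p) ℝ)
    (a0 : Fin p → ℝ) (eps g : Ω → Fin n → ℝ) (bpath : ℝ → Ω → Fin p → ℝ) : Set Ω :=
  {ω | ∃ c : ℝ, 0 < c ∧ ∀ t, 0 ≤ t → ∀ t', 0 ≤ t' →
      c ≤ rayleighMin ((n : ℝ)⁻¹ • gramOf (XPath (X ω) Sig a0 (eps ω) (g ω) t))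
            (suppF (bpath t ω) ∪ suppF (bpath t' ω))}

/-- The event `Ω₂`. -/
def OmegaTwo {n p : ℕ} (X : Ω → Fin n → Fin p → ℝ) (Sig : Matrix (Fin p) (Fin p) ℝ)
    (a0 β : Fin p → ℝ) (eps g : Ω → Fin n → ℝ) (bpath bnl : ℝ → Ω → Fin p → ℝ)
    (σ lam0v M1 M2 M3 M4 M5 : ℝ) (sstar s0k : ℕ) : Set Ω :=
  {ω | ∀ t, 0 ≤ t →
      l2 (mulVec' (XPath (X ω) Sig a0 (eps ω) (g ω) t) (fun j => bpath t ω j - β j))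
          ≤ M1 * Real.sqrt ((n : ℝ) * sstar) * σ * lam0v ∧
      l2 (mulVec' (XPath (X ω) Sig a0 (eps ω) (g ω) t) (fun j => bnl t ω j - β j))
          ≤ M1 * Real.sqrt ((n : ℝ) * sstar) * σ * lam0v ∧
      Real.sqrt (quadForm Sig (fun j => bpath t ω j - β j))
          ≤ M2 * Real.sqrt (sstar : ℝ) * σ * lam0v ∧
      ((suppF (bpath t ω)).card ≤ sstar ∧ (sstar : ℝ) ≤ M3 * s0k) ∧
      (∀ w : Fin p → ℝ,
        subBilinInv ((n : ℝ)⁻¹ • gramOf (XPath (X ω) Sig a0 (eps ω) (g ω) t))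
            (suppF (bpath t ω)) w w
          ≤ M4 * subBilinInv Sig (suppF (bpath t ω)) w w) ∧
      max (max (l2 (eps ω) / σ)
            (C0 Sig a0 * l2 (z0Path (eps ω) (z0vec (X ω) Sig a0) (g ω) t)))
          ((n : ℝ) / (C0 Sig a0 * l2 (z0Path (eps ω) (z0vec (X ω) Sig a0) (g ω) t)))
        ≤ M5 * Real.sqrt (n : ℝ)}

/-- `Rem_I`. -/
def RemI {n p : ℕ} (σ : ℝ) (Sig : Matrix (Fin p) (Fin p) ℝ) (a0 β : Fin p → ℝ)
    (X : Ω → Fin n → Fin p → ℝ) (eps : Ω → Fin n → ℝ) (bpath : ℝ → Ω → Fin p → ℝ) (ω : Ω) :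
    ℝ :=
  pivot n σ Sig a0 β (bpath 0 ω) (X ω) (eps ω) 0 - TofModel n σ Sig a0 (X ω) (eps ω)
    - Real.sqrt (Fisher σ Sig a0 / n) *
        ∫ t in (0 : ℝ)..(Real.pi / 2),
          Real.sin t * ((suppF (bpath t ω)).card : ℝ) * dot a0 (fun j => bpath t ω j - β j)

/-- `Rem_II`. -/
def RemII {n p : ℕ} (σ : ℝ) (Sig : Matrix (Fin p) (Fin p) ℝ) (a0 β : Fin p → ℝ)
    (X : Ω → Fin n → Fin p → ℝ) (eps : Ω → Fin n → ℝ) (bpath : ℝ → Ω → Fin p → ℝ) (ω : Ω) :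
    ℝ :=
  pivot n σ Sig a0 β (bpath 0 ω) (X ω) (eps ω) 0 - TofModel n σ Sig a0 (X ω) (eps ω)
    - Real.sqrt (Fisher σ Sig a0 / n) * dot a0 (fun j => bpath 0 ω j - β j) *
        ∫ t in (0 : ℝ)..(Real.pi / 2), Real.sin t * ((suppF (bpath t ω)).card : ℝ)

end Events

/-- The matrix `D(t)` from the gradient formula of the Lasso path. -/
def DmatOf {n p : ℕ} (Xt : Fin n → Fin p → ℝ) (a0 β : Fin p → ℝ) (e : Fin n → ℝ)
    (bt : Fin p → ℝ) : Fin n → Fin p → ℝ :=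
  fun i j =>
    if hj : j ∈ suppF bt then
      ∑ b : {x // x ∈ suppF bt},
        (subMat (gramOf Xt) (suppF bt))⁻¹ ⟨j, hj⟩ b *
          (a0 b.1 * (e i - mulVec' Xt (fun j' => bt j' - β j') i)
            - Xt i b.1 * dot a0 (fun j' => bt j' - β j'))
    else 0

/-- The set `U₀(S̄, Σ̄, η₁, η₂)`. -/
def U0set {p : ℕ} (S : Finset (Fin p)) (Sig : Matrix (Fin p) (Fin p) ℝ) (η1 η2 : ℝ) :
    Set (Fin p → ℝ) :=
  {u | (∀ j ∉ S, abs (u j * Matrix.mulVec Sig u j + |u j|) ≤ η2 * |u j|) ∧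
    Real.sqrt (∑ j ∈ S, (Matrix.mulVec Sig u j) ^ 2) ≤ (1 + η1) * Real.sqrt (S.card : ℝ)}

/-- The Rademacher (symmetric random sign) law on ℝ. -/
def radLaw : Measure ℝ := (2 : ℝ≥0∞)⁻¹ • Measure.dirac 1 + (2 : ℝ≥0∞)⁻¹ • Measure.dirac (-1)

/-- A mean-zero, unit-variance law on ℝ with subgaussian norm at most `K`. -/
def SubgLaw (μ : Measure ℝ) (K : ℝ) : Prop :=
  IsProbabilityMeasure μ ∧ (∫ x, x ∂μ) = 0 ∧ (∫ x, x ^ 2 ∂μ) = 1 ∧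
    (∫ x, Real.exp (x ^ 2 / K ^ 2) ∂μ) ≤ 2

/-- `h` is a norm on `ℝᵖ`. -/
def IsNorm {p : ℕ} (h : (Fin p → ℝ) → ℝ) : Prop :=
  (∀ b, h b = 0 ↔ b = 0) ∧ (∀ (c : ℝ) (b : Fin p → ℝ), h (c • b) = |c| * h b) ∧
    ∀ a b : Fin p → ℝ, h (a + b) ≤ h a + h b

end BZ

namespace BZ

set_option linter.unusedSectionVars false

/-! ### Gaussian integration by parts -/

/-- Standard Gaussian measure on `κ → ℝ`. -/
def stdG (κ : Type*) [Fintype κ] : Measure (κ → ℝ) := Measure.pi fun _ => gaussianReal 0 1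

instance {κ : Type*} [Fintype κ] : IsProbabilityMeasure (stdG κ) := by
  unfold stdG; infer_instance

/-- Stein's identity `E[Z f(Z)] = E[f'(Z)]` in dimension one. -/
lemma gauss_ibp_one (f f' : ℝ → ℝ) (C : ℝ) (hf : ∀ x, HasDerivAt f (f' x) x)
    (hf'm : Measurable f') (hb : ∀ x, |f x| ≤ C) (hb' : ∀ x, |f' x| ≤ C) :
    ∫ x, x * f x ∂(gaussianReal 0 1) = ∫ x, f' x ∂(gaussianReal 0 1) := by
  have h1 : (1 : ℝ≥0) ≠ 0 := one_ne_zero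
  have hfm : Measurable f :=
    (continuous_iff_continuousAt.2 fun x => (hf x).continuousAt).measurable
  rw [integral_gaussianReal_eq_integral_smul h1, integral_gaussianReal_eq_integral_smul h1]
  set q := gaussianPDFReal 0 1 with hq
  have hqd : ∀ x, HasDerivAt q (-x * q x) x := by
    intro x
    have : q = fun x => (√(2 * Real.pi * (1 : ℝ≥0)))⁻¹ * Real.exp (-(x - 0) ^ 2 / (2 * (1 : ℝ≥0))) := by
      ext y; simp [hq, gaussianPDFReal_def]
    rw [this]
    have h2 : HasDerivAt (fun x : ℝ => -(x - 0) ^ 2 / (2 * ((1 : ℝ≥0) : ℝ))) (-x) x := by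
      have h3 := (((hasDerivAt_id x).sub_const 0).pow 2).neg.div_const (2 * ((1 : ℝ≥0) : ℝ))
      refine HasDerivAt.congr_deriv h3 ?_
      simp
      ring
    refine HasDerivAt.congr_deriv (h2.exp.const_mul _) ?_
    simp only []
    ring
  have hqi : Integrable q := integrable_gaussianPDFReal 0 1
  have hxq : Integrable (fun x => x * q x) := by
    have : Integrable (fun x : ℝ => x) (gaussianReal 0 1) :=
      memLp_one_iff_integrable.1 (memLp_id_gaussianReal' 1 (by simp))
    rw [gaussianReal_of_var_ne_zero _ h1] at this
    rw [integrable_withDensity_iff (measurable_gaussianPDF _ _) (by simp [gaussianPDF_lt_top])] at this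
    simpa [toReal_gaussianPDF] using this
  have key := integral_mul_deriv_eq_deriv_mul_of_integrable (u := f) (v := q) (u' := f')
    (v' := fun x => -x * q x) (fun x _ => hf x) (fun x _ => hqd x) ?_ ?_ ?_
  · simp only [smul_eq_mul]
    have e1 : ∀ x, q x * (x * f x) = -(f x * (-x * q x)) := fun x => by ring
    simp_rw [e1, integral_neg, key, neg_neg, mul_comm]
  · have := (hxq.neg).bdd_mul hfm.aestronglyMeasurable (ae_of_all _ hb)
    refine this.congr (ae_of_all _ fun x => ?_)
    simp
  · exact hqi.bdd_mul hf'm.aestronglyMeasurable (ae_of_all _ hb')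
  · exact hqi.bdd_mul hfm.aestronglyMeasurable (ae_of_all _ hb)

/-- Resampling one coordinate leaves the standard Gaussian measure invariant. -/
lemma measurePreserving_update {κ : Type*} [Fintype κ] [DecidableEq κ] (k : κ) :
    MeasurePreserving (fun q : (κ → ℝ) × ℝ => Function.update q.1 k q.2)
      ((stdG κ).prod (gaussianReal 0 1)) (stdG κ) := by
  have hm : Measurable (fun q : (κ → ℝ) × ℝ => Function.update q.1 k q.2) := by
    refine measurable_pi_lambda _ fun j => ?_
    by_cases h : j = k
    · subst h; simpa using measurable_snd
    · simp only [Function.update_of_ne h]; fun_prop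
  refine ⟨hm, ?_⟩
  symm
  refine Measure.pi_eq fun s hs => ?_
  rw [Measure.map_apply hm (MeasurableSet.univ_pi hs)]
  have : (fun q : (κ → ℝ) × ℝ => Function.update q.1 k q.2) ⁻¹' (Set.univ.pi s)
      = (Set.univ.pi (Function.update s k Set.univ)) ×ˢ (s k) := by
    ext q
    simp only [Set.mem_preimage, Set.mem_univ_pi, Set.mem_prod]
    constructor
    · intro h
      refine ⟨fun j => ?_, by simpa using h k⟩
      by_cases hj : j = k
      · subst hj; simp
      · simpa [Function.update_of_ne hj] using h j
    · rintro ⟨h, h2⟩ j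
      by_cases hj : j = k
      · subst hj; simpa using h2
      · simpa [Function.update_of_ne hj] using h j
  rw [this, Measure.prod_prod, stdG, Measure.pi_pi]
  rw [← Finset.mul_prod_erase Finset.univ _ (Finset.mem_univ k),
    ← Finset.mul_prod_erase Finset.univ (fun i => (gaussianReal 0 1) (s i)) (Finset.mem_univ k)]
  simp only [Function.update_self, measure_univ, one_mul]
  rw [mul_comm]
  congr 1
  refine Finset.prod_congr rfl fun j hj => ?_
  rw [Function.update_of_ne (Finset.ne_of_mem_erase hj)]

lemma integrable_coord {κ : Type*} [Fintype κ] (k : κ) :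
    Integrable (fun z : κ → ℝ => z k) (stdG κ) := by
  have h : MeasurePreserving (fun z : κ → ℝ => z k) (stdG κ) (gaussianReal 0 1) :=
    measurePreserving_eval _ k
  have hi : Integrable (fun x : ℝ => x) (gaussianReal 0 1) :=
    memLp_one_iff_integrable.1 (memLp_id_gaussianReal' 1 (by simp))
  exact h.integrable_comp_of_integrable hi

/-- Gaussian integration by parts. -/
lemma gauss_ibp {κ : Type*} [Fintype κ] [DecidableEq κ] (k : κ) (F F' : (κ → ℝ) → ℝ) (C : ℝ)
    (hF : ∀ z, HasDerivAt (fun x => F (Function.update z k x)) (F' z) (z k))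
    (hFm : Continuous F) (hF'm : Continuous F')
    (hb : ∀ z, |F z| ≤ C) (hb' : ∀ z, |F' z| ≤ C) :
    ∫ z, z k * F z ∂(stdG κ) = ∫ z, F' z ∂(stdG κ) := by
  have hmp := measurePreserving_update (κ := κ) k
  have hu : Continuous (fun q : (κ → ℝ) × ℝ => Function.update q.1 k q.2) := by fun_prop
  have i1 : Integrable (fun z : κ → ℝ => z k * F z) (stdG κ) :=
    (integrable_coord k).mul_bdd hFm.aestronglyMeasurable (ae_of_all _ hb)
  have i2 : Integrable F' (stdG κ) :=
    Integrable.of_bound hF'm.aestronglyMeasurable C (ae_of_all _ hb')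
  have e1 := hmp.map_eq
  rw [← e1, integral_map hmp.measurable.aemeasurable, integral_map hmp.measurable.aemeasurable]
  · rw [integral_prod, integral_prod]
    · congr 1
      ext z
      simp only [Function.update_self]
      refine gauss_ibp_one (fun x => F (Function.update z k x))
        (fun x => F' (Function.update z k x)) C (fun x => ?_) ?_ (fun x => hb _) (fun x => hb' _)
      · have := hF (Function.update z k x)
        simpa using this
      · exact (hF'm.comp (by fun_prop)).measurable
    · exact hmp.integrable_comp_of_integrable i2
    · exact hmp.integrable_comp_of_integrable i1
  · exact hF'm.aestronglyMeasurable
  · exact ((continuous_apply k).mul hFm).aestronglyMeasurable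

/-! ### Gaussian comparison by interpolation -/

section Comparison
variable {κ ι : Type*} [Fintype κ] [DecidableEq κ] [Fintype ι] [DecidableEq ι]
variable {E : Type*} [NormedAddCommGroup E] [NormedSpace ℝ E]

/-- The linear map `z ↦ ∑ k, z k • c k`. -/
def lin (c : κ → E) : (κ → ℝ) →L[ℝ] E :=
  ∑ k, (ContinuousLinearMap.proj (R := ℝ) (φ := fun _ : κ => ℝ) k).smulRight (c k)

lemma lin_apply (c : κ → E) (z : κ → ℝ) : lin c z = ∑ k, z k • c k := by
  simp [lin]

lemma hasDerivAt_lin_update (c : κ → E) (z : κ → ℝ) (k : κ) :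
    HasDerivAt (fun x => lin c (Function.update z k x)) (c k) (z k) := by
  have h := (lin c).hasFDerivAt.comp_hasDerivAt (z k) (hasDerivAt_update z k (z k))
  refine h.congr_deriv ?_
  simp [lin_apply, Pi.single_apply]

/-- A `C²` function with values in `[0, 1]` and bounded first two derivatives. -/
structure NiceFun (ψ : E → ℝ) (D1 : E → E →L[ℝ] ℝ) (D2 : E → E →L[ℝ] E →L[ℝ] ℝ) (C : ℝ) :
    Prop where
  h1 : ∀ x, HasFDerivAt ψ (D1 x) x
  h2 : ∀ x, HasFDerivAt D1 (D2 x) x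
  hc : Continuous D2
  nonneg : ∀ x, 0 ≤ ψ x
  le_one : ∀ x, ψ x ≤ 1
  b1 : ∀ x, ‖D1 x‖ ≤ C
  b2 : ∀ x, ‖D2 x‖ ≤ C

variable {ψ : E → ℝ} {D1 : E → E →L[ℝ] ℝ} {D2 : E → E →L[ℝ] E →L[ℝ] ℝ} {C : ℝ}

lemma NiceFun.c0 (h : NiceFun ψ D1 D2 C) : Continuous ψ :=
  continuous_iff_continuousAt.2 fun x => (h.h1 x).continuousAt

lemma NiceFun.c1 (h : NiceFun ψ D1 D2 C) : Continuous D1 :=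
  continuous_iff_continuousAt.2 fun x => (h.h2 x).continuousAt

lemma NiceFun.prod_bd (h : NiceFun ψ D1 D2 C) (s : Finset ι) (x : ι → E) :
    |∏ i ∈ s, ψ (x i)| ≤ 1 := by
  rw [abs_of_nonneg (Finset.prod_nonneg fun i _ => h.nonneg _)]
  exact Finset.prod_le_one (fun i _ => h.nonneg _) fun i _ => h.le_one _

lemma NiceFun.ap1 (h : NiceFun ψ D1 D2 C) (x v : E) : |D1 x v| ≤ C * ‖v‖ :=
  ((D1 x).le_opNorm v).trans (mul_le_mul_of_nonneg_right (h.b1 x) (norm_nonneg v))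

lemma NiceFun.ap2 (h : NiceFun ψ D1 D2 C) (x v w : E) : |D2 x v w| ≤ C * ‖v‖ * ‖w‖ :=
  ((D2 x).le_opNorm₂ v w).trans (by have := h.b2 x; gcongr)

/-- Gaussian integration by parts for one summand of the derivative along the interpolation. -/
lemma stein_term (h : NiceFun ψ D1 D2 C) (c : ι → κ → E) (i : ι) (k : κ) (v : E) :
    ∫ z, z k * ((∏ j ∈ Finset.univ.erase i, ψ (lin (c j) z)) * D1 (lin (c i) z) v) ∂(stdG κ) =
    ∫ z, ((∑ j ∈ Finset.univ.erase i, (∏ l ∈ (Finset.univ.erase i).erase j, ψ (lin (c l) z)) *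
        D1 (lin (c j) z) (c j k)) * D1 (lin (c i) z) v +
      (∏ j ∈ Finset.univ.erase i, ψ (lin (c j) z)) * D2 (lin (c i) z) (c i k) v) ∂(stdG κ) := by
  have hC : 0 ≤ C := (norm_nonneg _).trans (h.b1 0)
  have c0 := h.c0
  have c1 := h.c1
  have c2 := h.hc
  refine gauss_ibp k _ _ (max (1 * (C * ‖v‖))
    ((∑ j ∈ Finset.univ.erase i, 1 * (C * ‖c j k‖)) * (C * ‖v‖) + 1 * (C * ‖c i k‖ * ‖v‖)))
    ?_ ?_ ?_ ?_ ?_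
  · intro z
    have hp : HasDerivAt (fun x => ∏ j ∈ Finset.univ.erase i,
        ψ (lin (c j) (Function.update z k x)))
        (∑ j ∈ Finset.univ.erase i, (∏ l ∈ (Finset.univ.erase i).erase j,
          ψ (lin (c l) (Function.update z k (z k)))) • D1 (lin (c j) z) (c j k)) (z k) := by
      refine HasDerivAt.fun_finsetProd fun j _ => ?_
      have := (h.h1 (lin (c j) z))
      have h2 : HasFDerivAt ψ (D1 (lin (c j) z)) (lin (c j) (Function.update z k (z k))) := by
        simpa using this
      exact h2.comp_hasDerivAt (z k) (hasDerivAt_lin_update (c j) z k)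
    have hd : HasDerivAt (fun x => D1 (lin (c i) (Function.update z k x)) v)
        (D2 (lin (c i) z) (c i k) v) (z k) := by
      have h2 : HasFDerivAt D1 (D2 (lin (c i) z)) (lin (c i) (Function.update z k (z k))) := by
        simpa using h.h2 (lin (c i) z)
      have h3 := h2.comp_hasDerivAt (z k) (hasDerivAt_lin_update (c i) z k)
      exact ((ContinuousLinearMap.apply ℝ ℝ v).hasFDerivAt.comp_hasDerivAt (z k) h3)
    have := hp.mul hd
    simpa using! this
  · fun_prop
  · fun_prop
  · intro z
    refine le_max_of_le_left ?_
    rw [abs_mul]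
    gcongr
    · exact h.prod_bd _ _
    · exact h.ap1 _ _
  · intro z
    refine le_max_of_le_right ?_
    refine (abs_add_le _ _).trans ?_
    rw [abs_mul, abs_mul]
    gcongr
    · refine (Finset.abs_sum_le_sum_abs _ _).trans ?_
      refine Finset.sum_le_sum fun j _ => ?_
      rw [abs_mul]
      gcongr
      · exact h.prod_bd _ _
      · exact h.ap1 _ _
    · exact h.ap1 _ _
    · exact h.prod_bd _ _
    · exact h.ap2 _ _ _

lemma integrable_summand (h : NiceFun ψ D1 D2 C) (c : ι → κ → E) (i : ι) (k : κ) (v : E) :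
    Integrable (fun z => z k * ((∏ j ∈ Finset.univ.erase i, ψ (lin (c j) z)) *
      D1 (lin (c i) z) v)) (stdG κ) := by
  have hC : 0 ≤ C := (norm_nonneg _).trans (h.b1 0)
  have c0 := h.c0
  have c1 := h.c1
  refine (integrable_coord k).mul_bdd (c := 1 * (C * ‖v‖)) ?_ (ae_of_all _ fun z => ?_)
  · exact Continuous.aestronglyMeasurable (by fun_prop)
  · rw [Real.norm_eq_abs, abs_mul]
    gcongr
    · exact h.prod_bd _ _
    · exact h.ap1 _ _

/-- The derivative of `s ↦ E ∏ i, ψ (lin (c i) z)` in the direction `c'` is nonpositive: after integration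
by parts it is a sum of terms in `∑ k, T (c i k) (c' i k)` with `T` a second derivative, which vanish,
and of nonnegative multiples of the cross sums of `hoff`. -/
lemma stein_nonpos (h : NiceFun ψ D1 D2 C) (c c' : ι → κ → E)
    (hdiag : ∀ i (T : E →L[ℝ] E →L[ℝ] ℝ), ∑ k, T (c i k) (c' i k) = 0)
    (hoff : ∀ i j, i ≠ j → ∀ x y, ∑ k, D1 x (c j k) * D1 y (c' i k) ≤ 0) :
    ∫ z, ∑ i, (∏ j ∈ Finset.univ.erase i, ψ (lin (c j) z)) * D1 (lin (c i) z) (lin (c' i) z)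
      ∂(stdG κ) ≤ 0 := by
  have c0 := h.c0
  have c1 := h.c1
  have c2 := h.hc
  have hC : 0 ≤ C := (norm_nonneg _).trans (h.b1 0)
  have e1 : ∀ z : κ → ℝ, ∑ i, (∏ j ∈ Finset.univ.erase i, ψ (lin (c j) z)) *
      D1 (lin (c i) z) (lin (c' i) z) = ∑ i, ∑ k, z k *
      ((∏ j ∈ Finset.univ.erase i, ψ (lin (c j) z)) * D1 (lin (c i) z) (c' i k)) := by
    intro z
    refine Finset.sum_congr rfl fun i _ => ?_
    rw [lin_apply (c' i)]
    simp only [map_sum, map_smul, smul_eq_mul, Finset.mul_sum]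
    exact Finset.sum_congr rfl fun k _ => by ring
  simp_rw [e1]
  rw [integral_finset_sum _ fun i _ => integrable_finsetSum _ fun k _ =>
    integrable_summand h c i k _]
  refine Finset.sum_nonpos fun i _ => ?_
  rw [integral_finset_sum _ fun k _ => integrable_summand h c i k _]
  simp_rw [stein_term h]
  rw [← integral_finset_sum]
  · refine integral_nonpos fun z => ?_
    simp only [Pi.zero_apply]
    have e2 : ∑ k, ((∑ j ∈ Finset.univ.erase i,
        (∏ l ∈ (Finset.univ.erase i).erase j, ψ (lin (c l) z)) *
        D1 (lin (c j) z) (c j k)) * D1 (lin (c i) z) (c' i k) +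
      (∏ j ∈ Finset.univ.erase i, ψ (lin (c j) z)) * D2 (lin (c i) z) (c i k) (c' i k)) =
      ∑ j ∈ Finset.univ.erase i, (∏ l ∈ (Finset.univ.erase i).erase j, ψ (lin (c l) z)) *
        ∑ k, D1 (lin (c j) z) (c j k) * D1 (lin (c i) z) (c' i k) +
      (∏ j ∈ Finset.univ.erase i, ψ (lin (c j) z)) *
        ∑ k, D2 (lin (c i) z) (c i k) (c' i k) := by
      rw [Finset.sum_add_distrib, Finset.mul_sum]
      congr 1
      simp_rw [Finset.sum_mul, Finset.mul_sum]
      rw [Finset.sum_comm]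
      exact Finset.sum_congr rfl fun j _ => Finset.sum_congr rfl fun k _ => by ring
    rw [e2, hdiag, mul_zero, add_zero]
    refine Finset.sum_nonpos fun j hj => ?_
    refine mul_nonpos_of_nonneg_of_nonpos (Finset.prod_nonneg fun l _ => h.nonneg _) ?_
    exact hoff i j (Finset.ne_of_mem_erase hj).symm _ _
  · intro k _
    refine Integrable.of_bound (Continuous.aestronglyMeasurable (by fun_prop))
      ((∑ j ∈ Finset.univ.erase i, 1 * (C * ‖c j k‖)) * (C * ‖c' i k‖) +
        1 * (C * ‖c i k‖ * ‖c' i k‖)) (ae_of_all _ fun z => ?_)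
    rw [Real.norm_eq_abs]
    refine (abs_add_le _ _).trans ?_
    rw [abs_mul, abs_mul]
    gcongr
    · refine (Finset.abs_sum_le_sum_abs _ _).trans ?_
      refine Finset.sum_le_sum fun j _ => ?_
      rw [abs_mul]
      gcongr
      · exact h.prod_bd _ _
      · exact h.ap1 _ _
    · exact h.ap1 _ _
    · exact h.prod_bd _ _
    · exact h.ap2 _ _ _

/-- Slepian–Gordon comparison for vector valued Gaussian processes: equal covariances at each index
and larger cross covariances for `a` give a larger expectation of the product. The hypothesis `h0` says
that the two processes use disjoint sets of Gaussian coordinates, hence are independent; the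
interpolation is `cos s • a + sin s • b` on `[0, π / 2]`. -/
theorem gauss_comparison (h : NiceFun ψ D1 D2 C) (a b : ι → κ → E)
    (h0 : ∀ k, (∀ i, a i k = 0) ∨ (∀ i, b i k = 0))
    (hdiag : ∀ i (T : E →L[ℝ] E →L[ℝ] ℝ), ∑ k, T (a i k) (a i k) = ∑ k, T (b i k) (b i k))
    (hoff : ∀ i j, i ≠ j → ∀ x y,
      ∑ k, D1 x (b i k) * D1 y (b j k) ≤ ∑ k, D1 x (a i k) * D1 y (a j k)) :
    ∫ z, ∏ i, ψ (lin (b i) z) ∂(stdG κ) ≤ ∫ z, ∏ i, ψ (lin (a i) z) ∂(stdG κ) := by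
  have c0 := h.c0
  have c1 := h.c1
  have hC : 0 ≤ C := (norm_nonneg _).trans (h.b1 0)
  set c : ℝ → ι → κ → E := fun s i k => Real.cos s • a i k + Real.sin s • b i k with hc
  set c' : ℝ → ι → κ → E := fun s i k => -Real.sin s • a i k + Real.cos s • b i k with hc'
  have hlin : ∀ s i z, lin (c s i) z = Real.cos s • lin (a i) z + Real.sin s • lin (b i) z := by
    intro s i z
    simp only [lin_apply, hc, smul_add, Finset.sum_add_distrib, Finset.smul_sum]
    congr 1 <;> exact Finset.sum_congr rfl fun k _ => smul_comm _ _ _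
  have hlin' : ∀ s i z, lin (c' s i) z = -Real.sin s • lin (a i) z + Real.cos s • lin (b i) z := by
    intro s i z
    simp only [lin_apply, hc', smul_add, Finset.sum_add_distrib, Finset.smul_sum]
    congr 1 <;> exact Finset.sum_congr rfl fun k _ => smul_comm _ _ _
  set f : ℝ → ℝ := fun s => ∫ z, ∏ i, ψ (lin (c s i) z) ∂(stdG κ) with hf
  have hderiv : ∀ s, HasDerivAt f (∫ z, ∑ i, (∏ j ∈ Finset.univ.erase i, ψ (lin (c s j) z)) *
      D1 (lin (c s i) z) (lin (c' s i) z) ∂(stdG κ)) s := by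
    intro s
    refine (hasDerivAt_integral_of_dominated_loc_of_deriv_le (s := Set.univ) (μ := stdG κ)
      (F := fun s z => ∏ i, ψ (lin (c s i) z))
      (F' := fun s z => ∑ i, (∏ j ∈ Finset.univ.erase i, ψ (lin (c s j) z)) *
        D1 (lin (c s i) z) (lin (c' s i) z))
      (bound := fun z => ∑ i, 1 * (C * ∑ k, |z k| * (‖a i k‖ + ‖b i k‖)))
      Filter.univ_mem ?_ ?_ ?_ ?_ ?_ ?_).2
    · exact Filter.Eventually.of_forall fun x => Continuous.aestronglyMeasurable (by fun_prop)
    · exact Integrable.of_bound (Continuous.aestronglyMeasurable (by fun_prop)) 1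
        (ae_of_all _ fun z => h.prod_bd _ _)
    · exact Continuous.aestronglyMeasurable (by fun_prop)
    · refine ae_of_all _ fun z x _ => ?_
      rw [Real.norm_eq_abs]
      refine (Finset.abs_sum_le_sum_abs _ _).trans ?_
      refine Finset.sum_le_sum fun i _ => ?_
      rw [abs_mul]
      gcongr
      · exact h.prod_bd _ _
      · refine (h.ap1 _ _).trans ?_
        gcongr
        rw [lin_apply]
        refine (norm_sum_le _ _).trans (Finset.sum_le_sum fun k _ => ?_)
        rw [norm_smul, Real.norm_eq_abs]
        gcongr
        refine (norm_add_le _ _).trans ?_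
        rw [norm_smul, norm_smul, norm_neg, Real.norm_eq_abs, Real.norm_eq_abs]
        gcongr
        · exact mul_le_of_le_one_left (norm_nonneg _) (Real.abs_sin_le_one x)
        · exact mul_le_of_le_one_left (norm_nonneg _) (Real.abs_cos_le_one x)
    · refine integrable_finsetSum _ fun i _ => ?_
      refine ((integrable_finsetSum _ fun k _ => ?_).const_mul _).const_mul _
      exact (integrable_coord k).abs.mul_const _
    · refine ae_of_all _ fun z x _ => ?_
      have : HasDerivAt (fun x => ∏ i, ψ (lin (c x i) z))
        (∑ i, (∏ j ∈ Finset.univ.erase i, ψ (lin (c x j) z)) •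
          D1 (lin (c x i) z) (lin (c' x i) z)) x := by
        refine HasDerivAt.fun_finsetProd fun i _ => ?_
        have hl : HasDerivAt (fun x => lin (c x i) z) (lin (c' x i) z) x := by
          simp_rw [hlin, hlin']
          exact ((Real.hasDerivAt_cos x).smul_const _).add ((Real.hasDerivAt_sin x).smul_const _)
        exact (h.h1 _).comp_hasDerivAt x hl
      simpa using this
  have hbil : ∀ (S : E → E → ℝ) (i j : ι) (s : ℝ), (∀ x, S 0 x = 0) → (∀ x, S x 0 = 0) →
      (∀ r x y, S (r • x) y = r * S x y) → (∀ r x y, S x (r • y) = r * S x y) →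
      ∑ k, S (c s i k) (c' s j k) = Real.sin s * Real.cos s *
        (∑ k, S (b i k) (b j k) - ∑ k, S (a i k) (a j k)) := by
    intro S i j s z1 z2 m1 m2
    rw [← Finset.sum_sub_distrib, Finset.mul_sum]
    refine Finset.sum_congr rfl fun k _ => ?_
    rcases h0 k with hk | hk
    · simp only [hc, hc', hk, smul_zero, zero_add, m1, m2, z1, z2]; ring
    · simp only [hc, hc', hk, smul_zero, add_zero, m1, m2, z1, z2]; ring
  have hle : ∀ s ∈ interior (Set.Icc 0 (Real.pi / 2)), deriv f s ≤ 0 := by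
    intro s hs
    rw [interior_Icc] at hs
    rw [(hderiv s).deriv]
    have hsc : 0 ≤ Real.sin s * Real.cos s := by
      have := Real.pi_pos
      refine mul_nonneg (Real.sin_nonneg_of_nonneg_of_le_pi hs.1.le (by linarith [hs.2])) ?_
      exact Real.cos_nonneg_of_neg_pi_div_two_le_of_le (by linarith [hs.1]) hs.2.le
    refine stein_nonpos h (c s) (c' s) (fun i T => ?_) fun i j hij x y => ?_
    · rw [hbil (fun x y => T x y) i i s (by simp) (by simp) (by simp) (by simp), hdiag i T]
      simp
    · rw [hbil (fun u v => D1 x u * D1 y v) j i s (by simp) (by simp)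
        (by intros; simp; ring) (by intros; simp; ring)]
      exact mul_nonpos_of_nonneg_of_nonpos hsc (by linarith [hoff j i hij.symm x y])
  have hanti := antitoneOn_of_deriv_nonpos (convex_Icc 0 (Real.pi / 2))
    (fun s _ => (hderiv s).continuousAt.continuousWithinAt)
    (fun s _ => (hderiv s).differentiableAt.differentiableWithinAt) hle
  have hpi : (0 : ℝ) ≤ Real.pi / 2 := by have := Real.pi_pos; linarith
  have := hanti (Set.left_mem_Icc.2 hpi) (Set.right_mem_Icc.2 hpi) hpi
  simpa [hf, hc] using this

end Comparison

/-! ### Smooth test functions of the norm -/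

/-- The derivative of `Real.smoothTransition` is bounded and Lipschitz, since it has compact support. -/
lemma smoothTransition_bounds : ∃ B : ℝ, 0 ≤ B ∧ (∀ x, |deriv Real.smoothTransition x| ≤ B) ∧
    ∀ x y, |deriv Real.smoothTransition x - deriv Real.smoothTransition y| ≤ B * |x - y| := by
  have hcd : ContDiff ℝ 3 Real.smoothTransition := Real.smoothTransition.contDiff (n := 3)
  have hcd1 : ContDiff ℝ 2 (deriv Real.smoothTransition) := by
    have : ContDiff ℝ (2 + 1) Real.smoothTransition := by
      convert hcd using 1; norm_num
    exact (contDiff_succ_iff_deriv.1 this).2.2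
  have hsupp : HasCompactSupport (deriv Real.smoothTransition) := by
    refine HasCompactSupport.intro (isCompact_Icc (a := (0 : ℝ)) (b := 1)) fun x hx => ?_
    rcases lt_or_ge x 0 with h | h
    · have : Real.smoothTransition =ᶠ[nhds x] fun _ => 0 := by
        filter_upwards [Iio_mem_nhds h] with y hy
        exact Real.smoothTransition.zero_of_nonpos (le_of_lt hy)
      rw [this.deriv_eq]; simp
    · have h1 : 1 < x := by
        by_contra h'
        exact hx ⟨h, not_lt.1 h'⟩
      have : Real.smoothTransition =ᶠ[nhds x] fun _ => 1 := by
        filter_upwards [Ioi_mem_nhds h1] with y hy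
        exact Real.smoothTransition.one_of_one_le (le_of_lt hy)
      rw [this.deriv_eq]; simp
  obtain ⟨B1, hB1⟩ := hsupp.exists_bound_of_continuous hcd1.continuous
  have hc2 : Continuous (deriv (deriv Real.smoothTransition)) :=
    hcd1.continuous_deriv (by norm_num)
  obtain ⟨B2, hB2⟩ := hsupp.deriv.exists_bound_of_continuous hc2
  have hB10 : 0 ≤ B1 := (norm_nonneg _).trans (hB1 0)
  refine ⟨max B1 B2, le_max_of_le_left hB10, fun x => (hB1 x).trans (le_max_left _ _), ?_⟩
  intro x y
  have := Convex.norm_image_sub_le_of_norm_deriv_le (f := deriv Real.smoothTransition)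
    (C := max B1 B2) (s := Set.univ) (x := y) (y := x)
    (fun z _ => (hcd1.differentiable (by norm_num)).differentiableAt)
    (fun z _ => (hB2 z).trans (le_max_right _ _)) convex_univ trivial trivial
  simpa using this

section smoothNorm
variable {F : Type*} [NormedAddCommGroup F] [InnerProductSpace ℝ F]

/-- A smooth approximation `√(δ² + ‖v‖²)` of the Euclidean norm. -/
def sn (δ : ℝ) (v : F) : ℝ := Real.sqrt (δ ^ 2 + ‖v‖ ^ 2)

lemma sn_sq (δ : ℝ) (v : F) : sn δ v ^ 2 = δ ^ 2 + ‖v‖ ^ 2 := Real.sq_sqrt (by positivity)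

lemma sn_nonneg (δ : ℝ) (v : F) : 0 ≤ sn δ v := Real.sqrt_nonneg _

lemma norm_le_sn (δ : ℝ) (v : F) : ‖v‖ ≤ sn δ v :=
  Real.le_sqrt_of_sq_le (by nlinarith [sq_nonneg δ])

lemma le_sn {δ : ℝ} (v : F) : δ ≤ sn δ v :=
  Real.le_sqrt_of_sq_le (by nlinarith [sq_nonneg ‖v‖])

lemma sn_le {δ : ℝ} (hδ : 0 ≤ δ) (v : F) : sn δ v ≤ ‖v‖ + δ := by
  refine Real.sqrt_le_iff.2 ⟨by positivity, ?_⟩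
  nlinarith [mul_nonneg hδ (norm_nonneg v)]

lemma sn_lip {δ : ℝ} (hδ : 0 < δ) (v w : F) : |sn δ v - sn δ w| ≤ ‖v - w‖ := by
  refine le_trans ?_ (abs_norm_sub_norm_le v w)
  have h1 := sn_sq δ v
  have h2 := sn_sq δ w
  have h3 := norm_le_sn δ v
  have h4 := norm_le_sn δ w
  have h5 := le_sn (δ := δ) v
  have h6 := le_sn (δ := δ) w
  have hpos : 0 < sn δ v + sn δ w := by linarith
  have hprod : |sn δ v - sn δ w| * (sn δ v + sn δ w) = |‖v‖ - ‖w‖| * (‖v‖ + ‖w‖) := by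
    rw [← abs_of_pos hpos, ← abs_mul, ← abs_of_nonneg (add_nonneg (norm_nonneg v) (norm_nonneg w)),
      ← abs_mul]
    congr 1
    nlinarith
  refine le_of_mul_le_mul_right ?_ hpos
  rw [hprod]
  exact mul_le_mul_of_nonneg_left (by linarith) (abs_nonneg _)

lemma sn_contDiff {δ : ℝ} (hδ : 0 < δ) : ContDiff ℝ 2 (sn δ : F → ℝ) := by
  unfold sn
  refine ContDiff.sqrt (contDiff_const.add (contDiff_norm_sq ℝ)) fun v => ?_
  positivity

/-- The gradient `v / √(δ² + ‖v‖²)` of `sn δ`. -/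
def sg (δ : ℝ) (v : F) : F := (sn δ v)⁻¹ • v

lemma sg_norm {δ : ℝ} (hδ : 0 < δ) (v : F) : ‖sg δ v‖ ≤ 1 := by
  have := norm_le_sn δ v
  have h : 0 < sn δ v := hδ.trans_le (le_sn v)
  rw [sg, norm_smul, norm_inv, Real.norm_of_nonneg h.le, inv_mul_le_iff₀ h]
  simpa

lemma sg_lip {δ : ℝ} (hδ : 0 < δ) (v w : F) : ‖sg δ v - sg δ w‖ ≤ 2 / δ * ‖v - w‖ := by
  have hv : 0 < sn δ v := hδ.trans_le (le_sn v)
  have hw : 0 < sn δ w := hδ.trans_le (le_sn w)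
  have e : sg δ v - sg δ w = (sn δ v)⁻¹ • (v - w) + ((sn δ w - sn δ v) * (sn δ v)⁻¹) • sg δ w := by
    unfold sg
    rw [smul_smul, smul_sub, sub_mul, sub_mul]
    have : sn δ w * (sn δ v)⁻¹ * (sn δ w)⁻¹ = (sn δ v)⁻¹ := by field_simp
    rw [this, mul_inv_cancel₀ hv.ne', one_mul, sub_smul]
    abel
  rw [e]
  refine (norm_add_le _ _).trans ?_
  rw [norm_smul, norm_smul, norm_mul, norm_inv, Real.norm_of_nonneg hv.le]
  have h1 : (sn δ v)⁻¹ ≤ δ⁻¹ := inv_anti₀ hδ (le_sn v)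
  have h2 : ‖sn δ w - sn δ v‖ ≤ ‖v - w‖ := by
    rw [norm_sub_rev v w]; exact sn_lip hδ w v
  have h3 := sg_norm hδ w
  have i0 : 0 ≤ (sn δ v)⁻¹ := by positivity
  calc _ ≤ δ⁻¹ * ‖v - w‖ + (‖v - w‖ * δ⁻¹) * 1 := by gcongr
    _ = _ := by ring

lemma sn_hasFDerivAt {δ : ℝ} (hδ : 0 < δ) (v : F) :
    HasFDerivAt (sn δ) (innerSL ℝ (sg δ v)) v := by
  have h1 : HasFDerivAt (fun v : F => δ ^ 2 + ‖v‖ ^ 2) (2 • innerSL ℝ v) v := by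
    simpa using ((hasStrictFDerivAt_norm_sq v).hasFDerivAt).const_add (δ ^ 2)
  have := h1.sqrt (by positivity)
  have e : innerSL ℝ (sg δ v) = (1 / (2 * √(δ ^ 2 + ‖v‖ ^ 2))) • 2 • innerSL ℝ v := by
    ext w
    have h0 : 0 < Real.sqrt (δ ^ 2 + ‖v‖ ^ 2) := Real.sqrt_pos.2 (by positivity)
    simp [sg, sn, inner_smul_left]
    try field_simp
  rw [e]
  exact this

/-- The test function `(v, r) ↦ φ (√(δ² + ‖v‖²) + r)`. -/
def tf (δ : ℝ) (φ : ℝ → ℝ) (x : F × ℝ) : ℝ := φ (sn δ x.1 + x.2)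

variable {δ : ℝ} {φ : ℝ → ℝ} {B : ℝ}

lemma tf_hasFDerivAt (hδ : 0 < δ) (hφ : ContDiff ℝ 2 φ) (x : F × ℝ) :
    HasFDerivAt (tf δ φ) (deriv φ (sn δ x.1 + x.2) •
      ((innerSL ℝ (sg δ x.1)).comp (ContinuousLinearMap.fst ℝ F ℝ) +
        ContinuousLinearMap.snd ℝ F ℝ)) x := by
  have h1 : HasFDerivAt (fun x : F × ℝ => sn δ x.1 + x.2)
      ((innerSL ℝ (sg δ x.1)).comp (ContinuousLinearMap.fst ℝ F ℝ) +
        ContinuousLinearMap.snd ℝ F ℝ) x :=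
    ((sn_hasFDerivAt hδ x.1).comp x hasFDerivAt_fst).add hasFDerivAt_snd
  have h2 := ((hφ.differentiable (by norm_num)).differentiableAt
    (x := sn δ x.1 + x.2)).hasDerivAt
  exact h2.comp_hasFDerivAt x h1

lemma tf_fderiv (hδ : 0 < δ) (hφ : ContDiff ℝ 2 φ) (x : F × ℝ) (w : F × ℝ) :
    fderiv ℝ (tf δ φ) x w = deriv φ (sn δ x.1 + x.2) * (inner ℝ (sg δ x.1) w.1 + w.2) := by
  rw [(tf_hasFDerivAt hδ hφ x).fderiv]
  simp [mul_add]

lemma tf_contDiff (hδ : 0 < δ) (hφ : ContDiff ℝ 2 φ) : ContDiff ℝ 2 (tf δ φ : F × ℝ → ℝ) :=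
  hφ.comp (((sn_contDiff hδ).comp contDiff_fst).add contDiff_snd)

/-- `tf δ φ` is an admissible test function for `gauss_comparison` when `φ` is `C²` with values in
`[0, 1]` and a bounded Lipschitz derivative; smoothing the norm by `δ` bounds its second derivative. -/
lemma tf_nice (hδ : 0 < δ) (hφ : ContDiff ℝ 2 φ) (h0 : ∀ x, 0 ≤ φ x) (h1 : ∀ x, φ x ≤ 1)
    (hB : 0 ≤ B) (hd : ∀ x, |deriv φ x| ≤ B)
    (hl : ∀ x y, |deriv φ x - deriv φ y| ≤ B * |x - y|) :
    ∃ C, NiceFun (tf δ φ : F × ℝ → ℝ) (fderiv ℝ (tf δ φ)) (fderiv ℝ (fderiv ℝ (tf δ φ))) C := by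
  have hc := tf_contDiff (F := F) hδ hφ
  have hc1 : ContDiff ℝ 1 (fderiv ℝ (tf δ φ : F × ℝ → ℝ)) :=
    hc.fderiv_right (by norm_num)
  have hLb : ∀ v : F, ∀ w : F × ℝ, |inner ℝ (sg δ v) w.1 + w.2| ≤ 2 * ‖w‖ := by
    intro v w
    have h1 : |inner ℝ (sg δ v) w.1| ≤ 1 * ‖w.1‖ :=
      (abs_real_inner_le_norm _ _).trans (by gcongr; exact sg_norm hδ v)
    have h2 := norm_fst_le w
    have h3 : |w.2| ≤ ‖w‖ := norm_snd_le w
    refine (abs_add_le _ _).trans ?_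
    linarith
  have hdδ : 0 ≤ 2 / δ := by positivity
  let C := 4 * B + B * (2 / δ)
  have hCnn : 0 ≤ C := by positivity
  refine ⟨C, ⟨fun x => (tf_hasFDerivAt hδ hφ x).differentiableAt.hasFDerivAt,
    fun x => ((hc1.differentiable (by norm_num)) x).hasFDerivAt,
    hc1.continuous_fderiv (by norm_num), fun x => h0 _, fun x => h1 _, ?_, ?_⟩⟩
  · intro x
    refine ContinuousLinearMap.opNorm_le_bound _ hCnn fun w => ?_
    rw [tf_fderiv hδ hφ, Real.norm_eq_abs, abs_mul]
    calc _ ≤ B * (2 * ‖w‖) := mul_le_mul (hd _) (hLb _ _) (abs_nonneg _) hB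
      _ ≤ C * ‖w‖ := by
        rw [← mul_assoc]
        refine mul_le_mul_of_nonneg_right ?_ (norm_nonneg _)
        have : 0 ≤ B * (2 / δ) := by positivity
        simp only [C]; linarith
  · intro x
    have hlip : LipschitzWith ⟨C, hCnn⟩ (fderiv ℝ (tf δ φ : F × ℝ → ℝ)) := by
      refine LipschitzWith.of_dist_le_mul fun x y => ?_
      rw [dist_eq_norm, dist_eq_norm]
      refine ContinuousLinearMap.opNorm_le_bound _ (mul_nonneg hCnn (norm_nonneg _)) fun w => ?_
      rw [_root_.sub_apply, tf_fderiv hδ hφ, tf_fderiv hδ hφ, Real.norm_eq_abs]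
      have e : deriv φ (sn δ x.1 + x.2) * (inner ℝ (sg δ x.1) w.1 + w.2) -
          deriv φ (sn δ y.1 + y.2) * (inner ℝ (sg δ y.1) w.1 + w.2) =
          (deriv φ (sn δ x.1 + x.2) - deriv φ (sn δ y.1 + y.2)) * (inner ℝ (sg δ x.1) w.1 + w.2) +
          deriv φ (sn δ y.1 + y.2) * inner ℝ (sg δ x.1 - sg δ y.1) w.1 := by
        rw [inner_sub_left]; ring
      rw [e]
      refine (abs_add_le _ _).trans ?_
      rw [abs_mul, abs_mul]
      have f1 : ‖x.1 - y.1‖ ≤ ‖x - y‖ := norm_fst_le (x - y)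
      have f2 : |x.2 - y.2| ≤ ‖x - y‖ := norm_snd_le (x - y)
      have a1 : |deriv φ (sn δ x.1 + x.2) - deriv φ (sn δ y.1 + y.2)| ≤ B * (2 * ‖x - y‖) := by
        refine (hl _ _).trans (mul_le_mul_of_nonneg_left ?_ hB)
        have : sn δ x.1 + x.2 - (sn δ y.1 + y.2) = (sn δ x.1 - sn δ y.1) + (x.2 - y.2) := by ring
        rw [this]
        refine (abs_add_le _ _).trans ?_
        have := sn_lip hδ x.1 y.1
        linarith
      have a2 : |inner ℝ (sg δ x.1 - sg δ y.1) w.1| ≤ 2 / δ * ‖x - y‖ * ‖w‖ := by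
        refine (abs_real_inner_le_norm _ _).trans ?_
        refine mul_le_mul ((sg_lip hδ _ _).trans (mul_le_mul_of_nonneg_left f1 hdδ)) (norm_fst_le w)
          (norm_nonneg _) (by positivity)
      calc _ ≤ B * (2 * ‖x - y‖) * (2 * ‖w‖) + B * (2 / δ * ‖x - y‖ * ‖w‖) := by
            refine add_le_add (mul_le_mul a1 (hLb _ _) (abs_nonneg _) (by positivity))
              (mul_le_mul (hd _) a2 (abs_nonneg _) hB)
        _ = _ := by
          show _ = C * _ * _
          simp only [C]; ring
    exact norm_fderiv_le_of_lipschitz ℝ hlip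

end smoothNorm

/-! ### Gordon's comparison for probabilities -/

lemma stdG_sum (α β : Type*) [Fintype α] [Fintype β] :
    MeasurePreserving (fun z : α ⊕ β → ℝ => (fun i => z (Sum.inl i), fun j => z (Sum.inr j)))
      (stdG (α ⊕ β)) ((stdG α).prod (stdG β)) :=
  measurePreserving_sumPiEquivProdPi (fun _ : α ⊕ β => gaussianReal 0 1)

lemma stdG_inl {α β : Type*} [Fintype α] [Fintype β] :
    MeasurePreserving (fun z : α ⊕ β → ℝ => fun i => z (Sum.inl i)) (stdG (α ⊕ β)) (stdG α) :=
  measurePreserving_fst.comp (stdG_sum α β)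

lemma stdG_inr {α β : Type*} [Fintype α] [Fintype β] :
    MeasurePreserving (fun z : α ⊕ β → ℝ => fun i => z (Sum.inr i)) (stdG (α ⊕ β)) (stdG β) :=
  measurePreserving_snd.comp (stdG_sum α β)

lemma gauss_half_nonneg : gaussianReal 0 1 (Set.Ici 0) ≥ 1 / 2 ∧
    gaussianReal 0 1 (Set.Iic 0) ≥ 1 / 2 := by
  have hneg : gaussianReal 0 1 (Set.Ici 0) = gaussianReal 0 1 (Set.Iic 0) := by
    have h := gaussianReal_map_neg (μ := 0) (v := 1)
    rw [neg_zero] at h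
    conv_lhs => rw [← h]
    rw [Measure.map_apply measurable_neg measurableSet_Ici]
    congr 1
    ext x; simp
  have h1 : (1 : ℝ≥0∞) ≤ gaussianReal 0 1 (Set.Ici 0) + gaussianReal 0 1 (Set.Iic 0) := by
    rw [← measure_univ (μ := gaussianReal 0 1), ← Set.Ici_union_Iic_of_le (le_refl (0:ℝ))]
    exact measure_union_le _ _
  rw [← hneg, ← two_mul] at h1
  have : (1 : ℝ≥0∞) / 2 ≤ gaussianReal 0 1 (Set.Ici 0) := by
    rw [ENNReal.div_le_iff_le_mul (by simp) (by simp), mul_comm]; exact h1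
  exact ⟨this, hneg ▸ this⟩

/-- The auxiliary independent coordinate costs only a factor two. -/
lemma half_trick {κ0 β : Type*} [Fintype κ0] [Fintype β] (A : Set (κ0 → ℝ))
    (T : Set ℝ) (hT : MeasurableSet T) (hT2 : 1 / 2 ≤ gaussianReal 0 1 T) :
    stdG κ0 A ≤ 2 * stdG ((κ0 ⊕ Unit) ⊕ β)
      {z | (fun k => z (Sum.inl (Sum.inl k))) ∈ A ∧ z (Sum.inl (Sum.inr ())) ∈ T} := by
  have hu : stdG Unit {w | w () ∈ T} = gaussianReal 0 1 T := by
    have := (measurePreserving_eval (fun _ : Unit => gaussianReal 0 1) ()).measure_preimage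
      hT.nullMeasurableSet
    exact this
  have h1 : stdG (κ0 ⊕ Unit) {z | (fun k => z (Sum.inl k)) ∈ A ∧ z (Sum.inr ()) ∈ T} =
      stdG κ0 A * gaussianReal 0 1 T := by
    rw [← hu, ← Measure.prod_prod]
    exact (stdG_sum κ0 Unit).measure_preimage_emb
      (MeasurableEquiv.sumPiEquivProdPi (fun _ : κ0 ⊕ Unit => ℝ)).measurableEmbedding
      (A ×ˢ {w | w () ∈ T})
  have h2 : stdG ((κ0 ⊕ Unit) ⊕ β)
      {z | (fun k => z (Sum.inl (Sum.inl k))) ∈ A ∧ z (Sum.inl (Sum.inr ())) ∈ T} =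
      stdG (κ0 ⊕ Unit) {z | (fun k => z (Sum.inl k)) ∈ A ∧ z (Sum.inr ()) ∈ T} := by
    set W := {z : κ0 ⊕ Unit → ℝ | (fun k => z (Sum.inl k)) ∈ A ∧ z (Sum.inr ()) ∈ T}
    have := (stdG_sum (κ0 ⊕ Unit) β).measure_preimage_emb
      (MeasurableEquiv.sumPiEquivProdPi (fun _ : (κ0 ⊕ Unit) ⊕ β => ℝ)).measurableEmbedding
      (W ×ˢ Set.univ)
    rw [Measure.prod_prod, measure_univ, mul_one] at this
    rw [← this]
    congr 1
    ext z
    simp [W]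
  rw [h2, h1]
  calc stdG κ0 A = 2 * (stdG κ0 A * (1 / 2)) := by
        rw [mul_comm, mul_assoc, one_div, ENNReal.inv_mul_cancel (by simp) (by simp), mul_one]
    _ ≤ _ := by gcongr

/-- Passage from expectations to probabilities: `f ≥ 1` off `B`, `g ≤ 0` on `A`, and `∫ f ≤ ∫ g`. -/
lemma measure_le_of_integral {Ω : Type*} [MeasurableSpace Ω] (μ : Measure Ω)
    [IsProbabilityMeasure μ] (f g : Ω → ℝ) (A B : Set Ω) (hA : MeasurableSet A)
    (hB : MeasurableSet B) (hf : Integrable f μ) (hg : Integrable g μ)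
    (hle : ∫ x, f x ∂μ ≤ ∫ x, g x ∂μ) (hf1 : ∀ x, x ∉ B → 1 ≤ f x) (hf0 : ∀ x, 0 ≤ f x)
    (hg1 : ∀ x, g x ≤ 1) (hg0 : ∀ x ∈ A, g x ≤ 0) : μ A ≤ μ B := by
  have h1 : 1 - μ.real B ≤ ∫ x, f x ∂μ := by
    rw [← probReal_compl_eq_one_sub hB, ← integral_indicator_one hB.compl]
    refine integral_mono ((integrable_const (1 : ℝ)).indicator hB.compl) hf fun x => ?_
    by_cases hx : x ∈ B <;> simp [hx, hf0, hf1]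
  have h2 : ∫ x, g x ∂μ ≤ 1 - μ.real A := by
    rw [← probReal_compl_eq_one_sub hA, ← integral_indicator_one hA.compl]
    refine integral_mono hg ((integrable_const (1 : ℝ)).indicator hA.compl) fun x => ?_
    by_cases hx : x ∈ A <;> simp [hx, hg0, hg1]
  have : μ.real A ≤ μ.real B := by linarith
  exact (ENNReal.toReal_le_toReal (measure_ne_top _ _) (measure_ne_top _ _)).1 this

section gordon
variable {κ0 ι : Type*} [Fintype κ0] [DecidableEq κ0] [Fintype ι] [DecidableEq ι] {n D : ℕ}

/-- Coefficients of the bilinear process augmented by one common coordinate. -/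
def coefA (α : ι → κ0 → EuclideanSpace ℝ (Fin n)) (i : ι) :
    (κ0 ⊕ Unit) ⊕ (Fin n ⊕ Fin D) → EuclideanSpace ℝ (Fin n) × ℝ
  | Sum.inl (Sum.inl k) => (α i k, 0)
  | Sum.inl (Sum.inr _) => (0, 1)
  | Sum.inr _ => 0

/-- Coefficients of Gordon's decoupled process. -/
def coefB (τ : ι → EuclideanSpace ℝ (Fin D)) (i : ι) :
    (κ0 ⊕ Unit) ⊕ (Fin n ⊕ Fin D) → EuclideanSpace ℝ (Fin n) × ℝ
  | Sum.inl _ => 0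
  | Sum.inr (Sum.inl r) => (EuclideanSpace.single r 1, 0)
  | Sum.inr (Sum.inr d) => (0, τ i d)

lemma lin_coefA (α : ι → κ0 → EuclideanSpace ℝ (Fin n)) (i : ι)
    (z : (κ0 ⊕ Unit) ⊕ (Fin n ⊕ Fin D) → ℝ) :
    lin (coefA α i) z = (∑ k, z (Sum.inl (Sum.inl k)) • α i k, z (Sum.inl (Sum.inr ()))) := by
  rw [lin_apply]
  ext1 <;> simp [coefA, Fintype.sum_sum_type, Prod.fst_sum, Prod.snd_sum]

lemma lin_coefB (τ : ι → EuclideanSpace ℝ (Fin D)) (i : ι)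
    (z : (κ0 ⊕ Unit) ⊕ (Fin n ⊕ Fin D) → ℝ) :
    lin (coefB τ i) z = (WithLp.toLp 2 fun r => z (Sum.inr (Sum.inl r)),
      inner ℝ (τ i) (WithLp.toLp 2 fun d => z (Sum.inr (Sum.inr d)))) := by
  rw [lin_apply]
  ext1
  · ext r
    simp [coefB, Fintype.sum_sum_type, Prod.fst_sum, Pi.single_apply]
  · simp [coefB, Fintype.sum_sum_type, Prod.snd_sum, PiLp.inner_apply]

/-- A Gaussian vector `∑ z k • α k` with identity covariance has the same second moments, tested against
any bilinear form `T`, as the standard one. -/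
lemma bilin_of_cov (α : κ0 → EuclideanSpace ℝ (Fin n))
    (h : ∀ x y, ∑ k, inner ℝ x (α k) * inner ℝ y (α k) = inner ℝ x y)
    (T : EuclideanSpace ℝ (Fin n) →L[ℝ] EuclideanSpace ℝ (Fin n) →L[ℝ] ℝ) :
    ∑ k, T (α k) (α k) = ∑ r, T (EuclideanSpace.single r 1) (EuclideanSpace.single r 1) := by
  have hα : ∀ k, α k = ∑ r, (α k r) • EuclideanSpace.single r (1 : ℝ) := by
    intro k; ext j; simp [Pi.single_apply]
  have e : ∀ k, T (α k) (α k) = ∑ r, ∑ r', (α k r * α k r') *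
      T (EuclideanSpace.single r 1) (EuclideanSpace.single r' 1) := by
    intro k
    conv_lhs => rw [hα k]
    simp only [map_sum, map_smul, _root_.sum_apply, _root_.smul_apply, smul_eq_mul,
      Finset.mul_sum]
    rw [Finset.sum_comm]
    refine Finset.sum_congr rfl fun r _ => Finset.sum_congr rfl fun r' _ => ?_
    ring
  simp_rw [e]
  rw [Finset.sum_comm]
  refine Finset.sum_congr rfl fun r _ => ?_
  rw [Finset.sum_comm]
  simp_rw [← Finset.sum_mul]
  have h2 : ∀ r', ∑ k, α k r * α k r' = if r = r' then 1 else 0 := by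
    intro r'
    have := h (EuclideanSpace.single r 1) (EuclideanSpace.single r' 1)
    simpa [EuclideanSpace.inner_single_left, Pi.single_apply, eq_comm] using this
  simp [h2]

/-- Hypotheses of the comparison: the isotropic vectors `∑ z k • α i k` against
`(h, ⟨g, τ i⟩)`. -/
structure GordonPair (α : ι → κ0 → EuclideanSpace ℝ (Fin n)) (τ : ι → EuclideanSpace ℝ (Fin D)) :
    Prop where
  iso : ∀ i x y, ∑ k, inner ℝ x (α i k) * inner ℝ y (α i k) = inner ℝ x y
  unit : ∀ i, ‖τ i‖ = 1
  cross : ∀ i j x y, ‖x‖ ≤ 1 → ‖y‖ ≤ 1 →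
    inner ℝ x y - ∑ k, inner ℝ x (α i k) * inner ℝ y (α j k) ≤ 1 - inner ℝ (τ i) (τ j)

variable {α : ι → κ0 → EuclideanSpace ℝ (Fin n)} {τ : ι → EuclideanSpace ℝ (Fin D)}

/-- The comparison for test functions `φ (norm + last coordinate)`. The derivative of such a function is
`φ' · (⟨x, ·⟩, 1)` with `‖x‖ ≤ 1`, so its cross sums are controlled by `GordonPair.cross`. -/
lemma gordon_integral (hG : GordonPair α τ) {δ : ℝ} {φ : ℝ → ℝ} {B : ℝ}
    (hδ : 0 < δ) (hφ : ContDiff ℝ 2 φ) (h0 : ∀ x, 0 ≤ φ x) (h1 : ∀ x, φ x ≤ 1)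
    (hB : 0 ≤ B) (hd : ∀ x, |deriv φ x| ≤ B)
    (hl : ∀ x y, |deriv φ x - deriv φ y| ≤ B * |x - y|)
    (hs : ∀ x y, 0 ≤ deriv φ x * deriv φ y) :
    ∫ z, ∏ i, tf δ φ (lin (coefB τ i) z) ∂(stdG ((κ0 ⊕ Unit) ⊕ (Fin n ⊕ Fin D))) ≤
    ∫ z, ∏ i, tf δ φ (lin (coefA α i) z) ∂(stdG ((κ0 ⊕ Unit) ⊕ (Fin n ⊕ Fin D))) := by
  obtain ⟨C, hC⟩ := tf_nice (F := EuclideanSpace ℝ (Fin n)) hδ hφ h0 h1 hB hd hl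
  refine gauss_comparison hC (coefA α) (coefB τ) ?_ ?_ ?_
  · rintro (k | k)
    · exact Or.inr fun i => rfl
    · exact Or.inl fun i => rfl
  · intro i T
    simp only [Fintype.sum_sum_type, coefA, coefB, map_zero, Finset.sum_const_zero, add_zero,
      zero_add, Finset.univ_unique, Finset.sum_singleton]
    have hT1 := bilin_of_cov (α i) (hG.iso i)
      ((ContinuousLinearMap.compL ℝ _ _ ℝ).flip (ContinuousLinearMap.inl ℝ _ ℝ) ∘L T ∘L
        (ContinuousLinearMap.inl ℝ (EuclideanSpace ℝ (Fin n)) ℝ))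
    simp only [ContinuousLinearMap.comp_apply, ContinuousLinearMap.flip_apply,
      ContinuousLinearMap.compL_apply, ContinuousLinearMap.inl_apply] at hT1
    rw [hT1]
    congr 1
    have hsm : ∀ d, ((0 : EuclideanSpace ℝ (Fin n)), τ i d) = τ i d • ((0 : EuclideanSpace ℝ (Fin n)), (1 : ℝ)) := by
      intro d; simp
    have hn := hG.unit i
    simp_rw [hsm]
    simp only [map_smul, _root_.smul_apply, smul_eq_mul]
    simp_rw [← mul_assoc, ← Finset.sum_mul]
    have : ∑ d, τ i d * τ i d = 1 := by
      have h2 : ‖τ i‖ ^ 2 = 1 := by rw [hn]; norm_num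
      rw [EuclideanSpace.norm_sq_eq] at h2
      simpa [sq] using h2
    rw [this, one_mul]
  · intro i j _ x y
    simp only [tf_fderiv hδ hφ, Fintype.sum_sum_type, coefA, coefB, Prod.fst_zero, Prod.snd_zero,
      inner_zero_right, add_zero, mul_zero, Finset.sum_const_zero, zero_add, Finset.univ_unique,
      Finset.sum_singleton, mul_one]
    set p := deriv φ (sn δ x.1 + x.2)
    set q := deriv φ (sn δ y.1 + y.2)
    have key := hG.cross i j (sg δ x.1) (sg δ y.1) (sg_norm hδ _) (sg_norm hδ _)
    have e1 : ∑ r, p * inner ℝ (sg δ x.1) (EuclideanSpace.single r 1) *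
        (q * inner ℝ (sg δ y.1) (EuclideanSpace.single r 1)) =
        p * q * inner ℝ (sg δ x.1) (sg δ y.1) := by
      rw [PiLp.inner_apply, Finset.mul_sum]
      refine Finset.sum_congr rfl fun r _ => ?_
      simp [EuclideanSpace.inner_single_right]; ring
    have e2 : ∑ d, p * τ i d * (q * τ j d) = p * q * inner ℝ (τ i) (τ j) := by
      rw [PiLp.inner_apply, Finset.mul_sum]
      refine Finset.sum_congr rfl fun r _ => ?_
      simp; ring
    have e3 : ∑ k, p * inner ℝ (sg δ x.1) (α i k) * (q * inner ℝ (sg δ y.1) (α j k)) =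
        p * q * ∑ k, inner ℝ (sg δ x.1) (α i k) * inner ℝ (sg δ y.1) (α j k) := by
      rw [Finset.mul_sum]
      refine Finset.sum_congr rfl fun r _ => ?_
      ring
    rw [e1, e2, e3]
    nlinarith [mul_le_mul_of_nonneg_left key (hs (sn δ x.1 + x.2) (sn δ y.1 + y.2))]

/-- Smooth step: `0` below `b0` and `1` above `b1`. -/
def step (b0 b1 x : ℝ) : ℝ := Real.smoothTransition ((x - b0) / (b1 - b0))

lemma step_contDiff (b0 b1 : ℝ) : ContDiff ℝ 2 (step b0 b1) :=
  (Real.smoothTransition.contDiff (n := 2)).comp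
    ((contDiff_id.sub contDiff_const).div_const _)

lemma step_deriv (b0 b1 x : ℝ) :
    deriv (step b0 b1) x = deriv Real.smoothTransition ((x - b0) / (b1 - b0)) * (1 / (b1 - b0)) := by
  have h1 : HasDerivAt (fun x : ℝ => (x - b0) / (b1 - b0)) (1 / (b1 - b0)) x :=
    ((hasDerivAt_id x).sub_const b0).div_const _
  have h2 := ((Real.smoothTransition.contDiff (n := 2)).differentiable (by norm_num)
    ((x - b0) / (b1 - b0))).hasDerivAt
  exact (h2.comp x h1).deriv

lemma step_bounds (b0 b1 : ℝ) : ∃ B : ℝ, 0 ≤ B ∧ (∀ x, |deriv (step b0 b1) x| ≤ B) ∧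
    (∀ x y, |deriv (step b0 b1) x - deriv (step b0 b1) y| ≤ B * |x - y|) := by
  obtain ⟨B, hB, h1, h2⟩ := smoothTransition_bounds
  set c := |1 / (b1 - b0)| with hc
  have hc0 : 0 ≤ c := abs_nonneg _
  refine ⟨B * c + B * c ^ 2, by positivity, fun x => ?_, fun x y => ?_⟩
  · rw [step_deriv, abs_mul]
    have := mul_le_mul_of_nonneg_right (h1 ((x - b0) / (b1 - b0))) hc0
    have : 0 ≤ B * c ^ 2 := by positivity
    linarith
  · rw [step_deriv, step_deriv, ← sub_mul, abs_mul]
    have h3 := mul_le_mul_of_nonneg_right (h2 ((x - b0) / (b1 - b0)) ((y - b0) / (b1 - b0))) hc0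
    have e : |(x - b0) / (b1 - b0) - (y - b0) / (b1 - b0)| = c * |x - y| := by
      rw [hc, ← abs_mul]; congr 1; ring
    rw [e] at h3
    have : 0 ≤ B * c * |x - y| := by positivity
    nlinarith

lemma step_sign {b0 b1 : ℝ} (x y : ℝ) :
    0 ≤ deriv (step b0 b1) x * deriv (step b0 b1) y := by
  rw [step_deriv, step_deriv]
  have hx := Real.smoothTransition.monotone.deriv_nonneg (x := (x - b0) / (b1 - b0))
  have hy := Real.smoothTransition.monotone.deriv_nonneg (x := (y - b0) / (b1 - b0))
  nlinarith [mul_nonneg (mul_nonneg hx hy) (mul_self_nonneg (1 / (b1 - b0)))]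

lemma tf_prod_integrable {κ : Type*} [Fintype κ] (c : ι → κ → EuclideanSpace ℝ (Fin n) × ℝ)
    {δ : ℝ} {φ : ℝ → ℝ} (hδ : 0 < δ) (hφ : ContDiff ℝ 2 φ) (h0 : ∀ x, 0 ≤ φ x)
    (h1 : ∀ x, φ x ≤ 1) : Integrable (fun z => ∏ i, tf δ φ (lin (c i) z)) (stdG κ) := by
  have hc : Continuous fun z => ∏ i, tf δ φ (lin (c i) z) :=
    continuous_finsetProd _ fun i _ => (tf_contDiff hδ hφ).continuous.comp (lin (c i)).continuous
  refine Integrable.of_bound hc.aestronglyMeasurable 1 (ae_of_all _ fun z => ?_)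
  have hp : 0 ≤ ∏ i, tf δ φ (lin (c i) z) := Finset.prod_nonneg fun i _ => h0 _
  rw [Real.norm_of_nonneg hp]
  exact Finset.prod_le_one (fun i _ => h0 _) fun i _ => h1 _

/-- The Gordon comparison at the level of probabilities. -/
lemma gordon_prob (hG : GordonPair α τ) {δ b0 b1 : ℝ} (hδ : 0 < δ)
    (A : Set (κ0 → ℝ)) (hA : MeasurableSet A) (T : Set ℝ) (hT : MeasurableSet T)
    (hT2 : 1 / 2 ≤ gaussianReal 0 1 T) (Bs : Set (Fin n ⊕ Fin D → ℝ)) (hBs : MeasurableSet Bs)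
    (hAT : ∀ z ∈ A, ∀ γ ∈ T, ∃ i, step b0 b1 (sn δ (∑ k, z k • α i k) + γ) = 0)
    (hBT : ∀ z ∉ Bs, ∀ i, step b0 b1 (sn δ (WithLp.toLp 2 fun r => z (Sum.inl r)) +
      inner ℝ (τ i) (WithLp.toLp 2 fun d => z (Sum.inr d))) = 1) :
    stdG κ0 A ≤ 2 * stdG (Fin n ⊕ Fin D) Bs := by
  obtain ⟨B, hB, h1, h2⟩ := step_bounds b0 b1
  have s0 : ∀ x, 0 ≤ step b0 b1 x := fun x => Real.smoothTransition.nonneg _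
  have s1 : ∀ x, step b0 b1 x ≤ 1 := fun x => Real.smoothTransition.le_one _
  have hInt := gordon_integral hG hδ (step_contDiff b0 b1) s0 s1 hB h1 h2 step_sign
  refine (half_trick (β := Fin n ⊕ Fin D) A T hT hT2).trans ?_
  gcongr
  have hmB : stdG (Fin n ⊕ Fin D) Bs = stdG ((κ0 ⊕ Unit) ⊕ (Fin n ⊕ Fin D))
      ((fun z i => z (Sum.inr i)) ⁻¹' Bs) :=
    (stdG_inr.measure_preimage hBs.nullMeasurableSet).symm
  rw [hmB]
  refine measure_le_of_integral _ _ _ _ _ ?_ ?_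
    (tf_prod_integrable (coefB τ) hδ (step_contDiff b0 b1) s0 s1)
    (tf_prod_integrable (coefA α) hδ (step_contDiff b0 b1) s0 s1) hInt ?_ ?_ ?_ ?_
  · exact (hA.preimage (by fun_prop)).inter (hT.preimage (by fun_prop))
  · exact hBs.preimage (by fun_prop)
  · intro z hz
    refine le_of_eq (Finset.prod_eq_one fun i _ => ?_).symm
    rw [lin_coefB]
    exact hBT _ hz i
  · exact fun z => Finset.prod_nonneg fun i _ => s0 _
  · exact fun z => Finset.prod_le_one (fun i _ => s0 _) fun i _ => s1 _
  · rintro z ⟨hz1, hz2⟩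
    obtain ⟨i, hi⟩ := hAT _ hz1 _ hz2
    refine le_of_eq (Finset.prod_eq_zero (Finset.mem_univ i) ?_)
    rw [lin_coefA]
    exact hi

lemma step_zero {b0 b1 x : ℝ} (h : (x - b0) / (b1 - b0) ≤ 0) : step b0 b1 x = 0 :=
  Real.smoothTransition.zero_of_nonpos h

lemma step_one {b0 b1 x : ℝ} (h : 1 ≤ (x - b0) / (b1 - b0)) : step b0 b1 x = 1 :=
  Real.smoothTransition.one_of_one_le h

lemma measurable_V (i : ι) : Measurable fun z : κ0 → ℝ => ‖∑ k, z k • α i k‖ := by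
  have : Continuous fun z : κ0 → ℝ => ‖∑ k, z k • α i k‖ := by fun_prop
  exact this.measurable

lemma continuous_nl : Continuous fun z : Fin n ⊕ Fin D → ℝ =>
    ‖(WithLp.toLp 2 fun r => z (Sum.inl r) : EuclideanSpace ℝ (Fin n))‖ := by fun_prop

lemma continuous_nr : Continuous fun z : Fin n ⊕ Fin D → ℝ =>
    ‖(WithLp.toLp 2 fun r => z (Sum.inr r) : EuclideanSpace ℝ (Fin D))‖ := by fun_prop

/-- Largest norm: `sup ‖V i‖` is compared with `‖h‖ + sup ⟨τ i, γ⟩ ≤ ‖h‖ + ‖γ‖`. -/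
theorem gordon_upper (hG : GordonPair α τ) {hi hi' : ℝ} (hh : hi' < hi) :
    stdG κ0 {z | ∃ i, hi ≤ ‖∑ k, z k • α i k‖} ≤ 2 * stdG (Fin n ⊕ Fin D)
      {z | hi' < ‖(WithLp.toLp 2 fun r => z (Sum.inl r) : EuclideanSpace ℝ (Fin n))‖ +
        ‖(WithLp.toLp 2 fun r => z (Sum.inr r) : EuclideanSpace ℝ (Fin D))‖} := by
  have hδ : 0 < (hi - hi') / 2 := by linarith
  -- a decreasing step: `1` below `(hi + hi') / 2` and `0` above `hi`
  refine gordon_prob hG (δ := (hi - hi') / 2) (b0 := hi) (b1 := (hi + hi') / 2) hδ _ ?_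
    (Set.Ici 0) measurableSet_Ici gauss_half_nonneg.1 _ ?_ ?_ ?_
  · rw [Set.ofPred_exists]
    exact MeasurableSet.iUnion fun i => measurableSet_le measurable_const (measurable_V i)
  · exact measurableSet_lt measurable_const (continuous_nl.add continuous_nr).measurable
  · rintro z ⟨i, hz⟩ γ hγ
    refine ⟨i, step_zero (div_nonpos_of_nonneg_of_nonpos ?_ (by linarith))⟩
    have := norm_le_sn ((hi - hi') / 2) (∑ k, z k • α i k)
    have : 0 ≤ γ := hγ
    linarith
  · intro z hz i
    simp only [Set.mem_ofPred_eq, not_lt] at hz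
    apply step_one
    rw [le_div_iff_of_neg (by linarith)]
    have h1 := sn_le hδ.le (WithLp.toLp 2 fun r => z (Sum.inl r) : EuclideanSpace ℝ (Fin n))
    have h2 := real_inner_le_norm (τ i) (WithLp.toLp 2 fun r => z (Sum.inr r))
    rw [hG.unit i, one_mul] at h2
    linarith

/-- Smallest norm: `inf ‖V i‖` is compared with `‖h‖ + inf ⟨τ i, γ⟩ ≥ ‖h‖ - ‖γ‖`. -/
theorem gordon_lower (hG : GordonPair α τ) {lo lo' : ℝ} (hh : lo < lo') :
    stdG κ0 {z | ∃ i, ‖∑ k, z k • α i k‖ ≤ lo} ≤ 2 * stdG (Fin n ⊕ Fin D)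
      {z | ‖(WithLp.toLp 2 fun r => z (Sum.inl r) : EuclideanSpace ℝ (Fin n))‖ -
        ‖(WithLp.toLp 2 fun r => z (Sum.inr r) : EuclideanSpace ℝ (Fin D))‖ < lo'} := by
  have hδ : 0 < (lo' - lo) / 2 := by linarith
  refine gordon_prob hG (δ := (lo' - lo) / 2) (b0 := (lo + lo') / 2) (b1 := lo') hδ _ ?_
    (Set.Iic 0) measurableSet_Iic gauss_half_nonneg.2 _ ?_ ?_ ?_
  · rw [Set.ofPred_exists]
    exact MeasurableSet.iUnion fun i => measurableSet_le (measurable_V i) measurable_const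
  · exact measurableSet_lt (continuous_nl.sub continuous_nr).measurable measurable_const
  · rintro z ⟨i, hz⟩ γ hγ
    refine ⟨i, step_zero (div_nonpos_of_nonpos_of_nonneg ?_ (by linarith))⟩
    have := sn_le hδ.le (∑ k, z k • α i k)
    have : γ ≤ 0 := hγ
    linarith
  · intro z hz i
    simp only [Set.mem_ofPred_eq, not_lt] at hz
    apply step_one
    rw [le_div_iff₀ (by linarith)]
    have h1 := norm_le_sn ((lo' - lo) / 2)
      (WithLp.toLp 2 fun r => z (Sum.inl r) : EuclideanSpace ℝ (Fin n))
    have h2 := neg_le_of_abs_le (abs_real_inner_le_norm (τ i) (WithLp.toLp 2 fun r => z (Sum.inr r)))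
    rw [hG.unit i, one_mul] at h2
    linarith

end gordon

/-! ### Tails of chi variables -/

/-- The moment generating function `E exp (μ Z²) = (1 - 2μ)^(-1/2)`. -/
lemma gauss_exp_sq {μ : ℝ} (hμ : μ < 1 / 2) :
    ∫ x, Real.exp (μ * x ^ 2) ∂(gaussianReal 0 1) = Real.exp (-(1 / 2) * Real.log (1 - 2 * μ)) := by
  rw [integral_gaussianReal_eq_integral_smul one_ne_zero]
  have e : ∀ x : ℝ, gaussianPDFReal 0 1 x • Real.exp (μ * x ^ 2) =
      (√(2 * Real.pi))⁻¹ * Real.exp (-(1 / 2 - μ) * x ^ 2) := by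
    intro x
    rw [gaussianPDFReal_def, smul_eq_mul, mul_assoc, ← Real.exp_add]
    simp only [NNReal.coe_one, mul_one, sub_zero]
    congr 2
    ring
  simp_rw [e]
  rw [integral_const_mul, integral_gaussian]
  have hpos : 0 < 1 - 2 * μ := by linarith
  have h2 : Real.exp (-(1 / 2) * Real.log (1 - 2 * μ)) = (√(1 - 2 * μ))⁻¹ := by
    rw [← Real.exp_log (Real.sqrt_pos.2 hpos), ← Real.exp_neg, Real.log_sqrt hpos.le]
    congr 1; ring
  rw [h2]
  have h3 : Real.pi / (1 / 2 - μ) = (2 * Real.pi) / (1 - 2 * μ) := by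
    field_simp
  rw [h3, Real.sqrt_div (by positivity)]
  have : √(2 * Real.pi) ≠ 0 := (Real.sqrt_pos.2 (by positivity)).ne'
  field_simp

/-- Exponential Markov inequality for quadratic forms in independent standard Gaussians. -/
lemma chernoff {κ : Type*} [Fintype κ] (μ : κ → ℝ) (hμ : ∀ k, μ k < 1 / 2) (c : ℝ)
    (A : Set (κ → ℝ)) (hA : ∀ z ∈ A, c ≤ ∑ k, μ k * z k ^ 2) :
    (stdG κ).real A ≤ Real.exp (-c - ∑ k, (1 / 2) * Real.log (1 - 2 * μ k)) := by
  have hInt : ∫ z, Real.exp (∑ k, μ k * z k ^ 2) ∂(stdG κ) =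
      Real.exp (-∑ k, (1 / 2) * Real.log (1 - 2 * μ k)) := by
    simp_rw [Real.exp_sum]
    have := integral_fintype_prod_eq_prod (𝕜 := ℝ) (ι := κ)
      (f := fun k x => Real.exp (μ k * x ^ 2)) (μ := fun _ => gaussianReal 0 1)
    rw [stdG, this, ← Finset.sum_neg_distrib, Real.exp_sum]
    refine Finset.prod_congr rfl fun k _ => ?_
    rw [gauss_exp_sq (hμ k)]
    congr 1; ring
  have hI : Integrable (fun z : κ → ℝ => Real.exp (∑ k, μ k * z k ^ 2)) (stdG κ) := by
    by_contra h
    rw [integral_undef h] at hInt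
    exact (Real.exp_pos _).ne hInt
  have h1 := mul_meas_ge_le_integral_of_nonneg (ae_of_all _ fun z => (Real.exp_pos _).le) hI
    (Real.exp c)
  rw [hInt] at h1
  have h2 : (stdG κ).real A ≤ (stdG κ).real {z | Real.exp c ≤ Real.exp (∑ k, μ k * z k ^ 2)} :=
    measureReal_mono fun z hz => Real.exp_le_exp.2 (hA z hz)
  rw [sub_eq_add_neg, Real.exp_add, Real.exp_neg c]
  refine h2.trans ?_
  rw [← div_eq_inv_mul, le_div_iff₀ (Real.exp_pos _), mul_comm]
  exact h1

section tails
variable {n D : ℕ}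

/-- Norm of the first block. -/
def nl (z : Fin n ⊕ Fin D → ℝ) : ℝ :=
  ‖(WithLp.toLp 2 fun r => z (Sum.inl r) : EuclideanSpace ℝ (Fin n))‖

/-- Norm of the second block. -/
def nr (z : Fin n ⊕ Fin D → ℝ) : ℝ :=
  ‖(WithLp.toLp 2 fun r => z (Sum.inr r) : EuclideanSpace ℝ (Fin D))‖

lemma nl_sq (z : Fin n ⊕ Fin D → ℝ) : nl z ^ 2 = ∑ r, z (Sum.inl r) ^ 2 := by
  simp [nl, EuclideanSpace.norm_sq_eq]

lemma nr_sq (z : Fin n ⊕ Fin D → ℝ) : nr z ^ 2 = ∑ r, z (Sum.inr r) ^ 2 := by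
  simp [nr, EuclideanSpace.norm_sq_eq]

lemma nl_nonneg (z : Fin n ⊕ Fin D → ℝ) : 0 ≤ nl z := norm_nonneg _
lemma nr_nonneg (z : Fin n ⊕ Fin D → ℝ) : 0 ≤ nr z := norm_nonneg _

/-- Two-block version of the exponential bound. -/
lemma chernoff_two (μ ν : ℝ) (hμ : μ < 1 / 2) (hν : ν < 1 / 2) (c : ℝ)
    (A : Set (Fin n ⊕ Fin D → ℝ)) (hA : ∀ z ∈ A, c ≤ μ * nl z ^ 2 + ν * nr z ^ 2) :
    (stdG (Fin n ⊕ Fin D)).real A ≤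
      Real.exp (-c - (n * (1 / 2 * Real.log (1 - 2 * μ)) + D * (1 / 2 * Real.log (1 - 2 * ν)))) := by
  have := chernoff (κ := Fin n ⊕ Fin D) (Sum.elim (fun _ => μ) (fun _ => ν))
    (by rintro (k | k) <;> assumption) c A (by
      intro z hz
      have := hA z hz
      rw [nl_sq, nr_sq, Finset.mul_sum, Finset.mul_sum] at this
      simpa using this)
  simpa [Fintype.sum_sum_type] using this

/-- The exponent produced by `chernoff` with parameter `μ = l / (2 (√N + l))`, the value for which
`amgm_chi` turns a bound on `l χ` into one on `μ χ²` with equality at `χ = √N + l`. -/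
lemma chi_exponent {N : ℕ} (hN : 0 < N) {l : ℝ} (hl : 0 ≤ l) :
    l / (2 * (√N + l)) < 1 / 2 ∧
      -(N * (1 / 2 * Real.log (1 - 2 * (l / (2 * (√N + l)))))) ≤ √N * l / 2 := by
  have hs : 0 < √(N : ℝ) := Real.sqrt_pos.2 (by exact_mod_cast hN)
  have hsq : √(N : ℝ) ^ 2 = N := Real.sq_sqrt (by positivity)
  constructor
  · rw [div_lt_div_iff₀ (by positivity) (by norm_num)]
    linarith
  · have e : 1 - 2 * (l / (2 * (√N + l))) = (1 + l / √N)⁻¹ := by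
      field_simp; ring
    rw [e, Real.log_inv]
    have h1 : Real.log (1 + l / √N) ≤ l / √N := by
      have := Real.log_le_sub_one_of_pos (show 0 < 1 + l / √(N : ℝ) by positivity)
      linarith
    have h2 : (N : ℝ) * (l / √N) = √N * l := by
      field_simp; rw [hsq]; ring
    nlinarith [mul_le_mul_of_nonneg_left h1 (show (0 : ℝ) ≤ N by positivity)]

lemma amgm_chi {l r χ : ℝ} (hl : 0 ≤ l) (hr : 0 < r) :
    l * χ ≤ l / (2 * r) * χ ^ 2 + l * r / 2 := by
  have : l / (2 * r) * χ ^ 2 + l * r / 2 - l * χ = l / (2 * r) * (χ - r) ^ 2 := by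
    field_simp; ring
  have h2 : 0 ≤ l / (2 * r) * (χ - r) ^ 2 := by positivity
  linarith

lemma tail_upper (hn : 0 < n) (hD : 0 < D) {S : ℝ} (hS : 0 ≤ S) :
    (stdG (Fin n ⊕ Fin D)).real {z | √n + √D + S < nl z + nr z} ≤ Real.exp (-S ^ 2 / 4) := by
  have hsn : 0 < √(n : ℝ) := Real.sqrt_pos.2 (by exact_mod_cast hn)
  have hsD : 0 < √(D : ℝ) := Real.sqrt_pos.2 (by exact_mod_cast hD)
  have hl : 0 ≤ S / 2 := by positivity
  obtain ⟨a1, a2⟩ := chi_exponent hn hl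
  obtain ⟨b1, b2⟩ := chi_exponent hD hl
  refine (chernoff_two (S / 2 / (2 * (√n + S / 2))) (S / 2 / (2 * (√D + S / 2))) a1 b1
    (S / 2 * (√n + √D + S) - S / 2 * (√n + S / 2) / 2 - S / 2 * (√D + S / 2) / 2) _ ?_).trans ?_
  · intro z hz
    have hz' : √n + √D + S < nl z + nr z := hz
    have c1 := amgm_chi (χ := nl z) hl (show 0 < √(n : ℝ) + S / 2 by positivity)
    have c2 := amgm_chi (χ := nr z) hl (show 0 < √(D : ℝ) + S / 2 by positivity)
    nlinarith [mul_le_mul_of_nonneg_left hz'.le hl]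
  · refine Real.exp_le_exp.2 ?_
    nlinarith

lemma tail_right (hD : 0 < D) {s : ℝ} (hs : 0 ≤ s) :
    (stdG (Fin n ⊕ Fin D)).real {z | √D + s ≤ nr z} ≤ Real.exp (-s ^ 2 / 2) := by
  have hsD : 0 < √(D : ℝ) := Real.sqrt_pos.2 (by exact_mod_cast hD)
  obtain ⟨b1, b2⟩ := chi_exponent hD hs
  refine (chernoff_two 0 (s / (2 * (√D + s))) (by norm_num) b1
    (s * (√D + s) - s * (√D + s) / 2) _ ?_).trans ?_
  · intro z hz
    have hz' : √D + s ≤ nr z := hz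
    have c2 := amgm_chi (χ := nr z) hs (show 0 < √(D : ℝ) + s by positivity)
    nlinarith [mul_le_mul_of_nonneg_left hz' hs]
  · refine Real.exp_le_exp.2 ?_
    simp only [mul_zero, sub_zero, Real.log_one, zero_add]
    nlinarith

lemma log_one_sub_le {t : ℝ} (h0 : 0 ≤ t) (h1 : t < 1) : Real.log (1 - t) ≤ -t - t ^ 2 / 2 := by
  have hp : 0 < 1 - t := by linarith
  have h2 := Real.le_log_one_add_of_nonneg (show 0 ≤ t / (1 - t) by positivity)
  have e : 1 + t / (1 - t) = (1 - t)⁻¹ := by field_simp; ring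
  rw [e, Real.log_inv] at h2
  have e2 : 2 * (t / (1 - t)) / (t / (1 - t) + 2) = 2 * t / (2 - t) := by
    have : 2 - t ≠ 0 := by linarith
    have : t + 2 * (1 - t) ≠ 0 := by linarith
    field_simp; ring
  rw [e2] at h2
  have h3 : t + t ^ 2 / 2 ≤ 2 * t / (2 - t) := by
    rw [le_div_iff₀ (by linarith)]
    nlinarith [pow_nonneg h0 3]
  linarith

lemma tail_left (hn : 0 < n) {s : ℝ} (hs : 0 ≤ s) (hs1 : s < √n) :
    (stdG (Fin n ⊕ Fin D)).real {z | nl z ≤ √n - s} ≤ Real.exp (-s ^ 2) := by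
  have hsn : 0 < √(n : ℝ) := Real.sqrt_pos.2 (by exact_mod_cast hn)
  have hsq : √(n : ℝ) ^ 2 = n := Real.sq_sqrt (by positivity)
  set t := s / √n with ht
  have hst : s = √n * t := by rw [ht]; field_simp
  have ht0 : 0 ≤ t := by positivity
  have ht1 : t < 1 := by rw [ht, div_lt_one hsn]; exact hs1
  have hp : 0 < 1 - t := by linarith
  set ν : ℝ := (((1 - t) ^ 2)⁻¹ - 1) / 2 with hν
  have hν0 : 0 ≤ ν := by
    have : 1 ≤ ((1 - t) ^ 2)⁻¹ := (one_le_inv₀ (by positivity)).2 (by nlinarith)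
    rw [hν]; linarith
  refine (chernoff_two (-ν) 0 (by linarith) (by norm_num) (-ν * (√n - s) ^ 2) _ ?_).trans ?_
  · intro z hz
    have hz' : nl z ≤ √n - s := hz
    have := nl_nonneg z
    have h2 : nl z ^ 2 ≤ (√n - s) ^ 2 := by gcongr
    nlinarith
  · refine Real.exp_le_exp.2 ?_
    have e1 : 1 - 2 * -ν = ((1 - t) ^ 2)⁻¹ := by rw [hν]; ring
    rw [e1, Real.log_inv, Real.log_pow]
    have h1 := log_one_sub_le ht0 ht1
    have e2 : ν * (√n - s) ^ 2 = n * (1 - (1 - t) ^ 2) / 2 := by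
      rw [hst, hν, show √(n : ℝ) - √n * t = √n * (1 - t) by ring, mul_pow, hsq]
      field_simp
    have e3 : s ^ 2 = n * t ^ 2 := by rw [hst, mul_pow, hsq]
    simp only [mul_zero, sub_zero, Real.log_one, add_zero, Nat.cast_ofNat]
    have : -(-ν * (√n - s) ^ 2) = n * (1 - (1 - t) ^ 2) / 2 := by rw [← e2]; ring
    rw [this, e3]
    have hn0 : (0 : ℝ) ≤ n := by positivity
    nlinarith [mul_le_mul_of_nonneg_left h1 hn0]

/-- Lower tail of the difference of two chi variables. The deviation `S` is split as `0.4 S + 0.6 S`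
because the left tail `exp (-s²)` of one chi variable decays faster than the right tail `exp (-s² / 2)`
of the other. -/
lemma tail_lower (hn : 0 < n) (hD : 0 < D) {S : ℝ} (hS : 0 ≤ S) (hS1 : S < √n) :
    (stdG (Fin n ⊕ Fin D)).real {z | nl z - nr z < √n - √D - S} ≤
      Real.exp (-(0.4 * S) ^ 2) + Real.exp (-(0.6 * S) ^ 2 / 2) := by
  have h1 := tail_left (D := D) hn (s := 0.4 * S) (by positivity) (by linarith)
  have h2 := tail_right (n := n) hD (s := 0.6 * S) (by positivity)
  refine le_trans ?_ (add_le_add h1 h2)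
  refine (measureReal_mono ?_).trans (measureReal_union_le _ _)
  intro z hz
  have hz' : nl z - nr z < √n - √D - S := hz
  by_contra hc
  simp only [Set.mem_union, Set.mem_ofPred_eq, not_or, not_le] at hc
  linarith [hc.1, hc.2]

end tails

/-! ### Two-sided deviation for finite families -/

/-- The final bound is nontrivial only if `3 exp (-y² / 8) < 1`, which forces `y ≥ 2.9`. -/
lemma y_lower {y : ℝ} (hy : 0 ≤ y) (h : 3 * Real.exp (-(y ^ 2 / 8)) < 1) : 2.9 ≤ y := by
  by_contra hc
  push Not at hc
  have h1 : y ^ 2 / 8 ≤ 1 + 0.052 := by nlinarith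
  have h2 : Real.exp (-(1 + 0.052)) ≤ Real.exp (-(y ^ 2 / 8)) := Real.exp_le_exp.2 (by linarith)
  rw [neg_add, Real.exp_add] at h2
  have h3 : (1 : ℝ) - 0.052 ≤ Real.exp (-0.052) := by
    have := Real.add_one_le_exp (-0.052 : ℝ); linarith
  have h4 : (1 : ℝ) / 2.72 ≤ Real.exp (-1) := by
    rw [Real.exp_neg, ← one_div]
    exact one_div_le_one_div_of_le (Real.exp_pos _) (by linarith [Real.exp_one_lt_d9])
  have h5 := mul_le_mul h4 h3 (by norm_num) (Real.exp_pos _).le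
  have h6 : (1 : ℝ) / 3 < 1 / 2.72 * (1 - 0.052) := by norm_num
  linarith

lemma exp_neg_le_of {a b c : ℝ} (hb : 0 ≤ b) (hab : b ≤ a) (hc : 1 ≤ c * (1 + b + b ^ 2 / 2)) :
    Real.exp (-a) ≤ c := by
  have h1 := Real.quadratic_le_exp_of_nonneg hb
  have h2 : Real.exp (-a) ≤ Real.exp (-b) := Real.exp_le_exp.2 (by linarith)
  refine h2.trans ?_
  have hc0 : 0 ≤ c := by
    by_contra h
    push Not at h
    nlinarith [sq_nonneg b]
  rw [Real.exp_neg, inv_le_iff_one_le_mul₀ (Real.exp_pos _)]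
  nlinarith

/-- The tail bounds of the two sides of the comparison add up to the claimed constant. -/
lemma numeric_bound {y S : ℝ} (hy : 2.9 ≤ y) (hS : y + 0.4 ≤ S) :
    2 * Real.exp (-S ^ 2 / 4) + 2 * (Real.exp (-(0.4 * S) ^ 2) + Real.exp (-(0.6 * S) ^ 2 / 2)) ≤
      3 * Real.exp (-(y ^ 2 / 8)) := by
  have hS2 : y ^ 2 + 0.8 * y + 0.16 ≤ S ^ 2 := by nlinarith
  have hy2 : 8.41 ≤ y ^ 2 := by nlinarith
  have e1 : Real.exp (-S ^ 2 / 4) ≤ 0.3 * Real.exp (-(y ^ 2 / 8)) := by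
    rw [← div_le_iff₀ (Real.exp_pos _), ← Real.exp_sub,
      show -S ^ 2 / 4 - -(y ^ 2 / 8) = -(S ^ 2 / 4 - y ^ 2 / 8) by ring]
    exact exp_neg_le_of (b := 1.6) (by norm_num) (by linarith) (by norm_num)
  have e2 : Real.exp (-(0.4 * S) ^ 2) ≤ 0.6 * Real.exp (-(y ^ 2 / 8)) := by
    rw [← div_le_iff₀ (Real.exp_pos _), ← Real.exp_sub,
      show -(0.4 * S) ^ 2 - -(y ^ 2 / 8) = -(0.16 * S ^ 2 - y ^ 2 / 8) by ring]
    exact exp_neg_le_of (b := 0.6) (by norm_num) (by linarith) (by norm_num)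
  have e3 : Real.exp (-(0.6 * S) ^ 2 / 2) ≤ 0.5 * Real.exp (-(y ^ 2 / 8)) := by
    rw [← div_le_iff₀ (Real.exp_pos _), ← Real.exp_sub,
      show -(0.6 * S) ^ 2 / 2 - -(y ^ 2 / 8) = -(0.18 * S ^ 2 - y ^ 2 / 8) by ring]
    exact exp_neg_le_of (b := 0.9) (by norm_num) (by linarith) (by norm_num)
  have := Real.exp_pos (-(y ^ 2 / 8))
  linarith

/-- Here `a = e₁ √n`, `d = √D` and `q = |B| + 1`: the hypothesis `2 q ≤ e₁² n` exceeds what the dimension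
`D ≤ q + 1` needs, and the surplus absorbs the numerical constants. -/
lemma dim_gap {a d q : ℝ} (ha : 0 ≤ a) (hq : 3 ≤ q) (hqa : 2 * q ≤ a ^ 2) (hd : d ^ 2 ≤ q + 1) :
    d + 0.44 ≤ a := by
  have h1 : 2.449 ≤ a := by nlinarith
  have h2 : d ^ 2 ≤ (a - 0.44) ^ 2 := by nlinarith
  have := abs_le_of_sq_le_sq h2 (by linarith)
  linarith [le_abs_self d]

section
variable {κ0 ι : Type*} [Fintype κ0] [DecidableEq κ0] [Fintype ι] [DecidableEq ι] {n D : ℕ}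
variable {α : ι → κ0 → EuclideanSpace ℝ (Fin n)} {τ : ι → EuclideanSpace ℝ (Fin D)}

/-- Two-sided deviation bound for finite families. -/
theorem gordon_both (hG : GordonPair α τ) (hn : 0 < n) (hD : 0 < D) {e1 e2 : ℝ} {q : ℕ}
    (he1 : 0 ≤ e1) (he2 : 0 ≤ e2) (he12 : e1 + e2 < 1) (hq : 3 ≤ q) (hDq : D ≤ q + 1)
    (hqn : (q : ℝ) ≤ e1 ^ 2 * n / 2) (hbig : 3 * Real.exp (-(n * e2 ^ 2 / 8)) < 1) :
    stdG κ0 {z | ∃ i, ‖∑ k, z k • α i k‖ ≤ √n * (1 - e1 - e2) ∨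
        √n * (1 + e1 + e2) ≤ ‖∑ k, z k • α i k‖} ≤
      ENNReal.ofReal (3 * Real.exp (-(n * e2 ^ 2 / 8))) := by
  have hsn : 0 < √(n : ℝ) := Real.sqrt_pos.2 (by exact_mod_cast hn)
  have hsq : √(n : ℝ) ^ 2 = n := Real.sq_sqrt (by positivity)
  have hye : ((√n * e2) ^ 2 / 8 : ℝ) = n * e2 ^ 2 / 8 := by rw [mul_pow, hsq]
  have hy : 2.9 ≤ √n * e2 := y_lower (by positivity) (by rw [hye]; exact hbig)
  have hgap : √(D : ℝ) + 0.44 ≤ √n * e1 := by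
    refine dim_gap (q := q) (by positivity) (by exact_mod_cast hq) ?_ ?_
    · rw [mul_pow, hsq]; linarith
    · rw [Real.sq_sqrt (by positivity)]; exact_mod_cast hDq
  set S := √n * (e1 + e2) - √D - 0.04 with hSdef
  have hS : √n * e2 + 0.4 ≤ S := by rw [hSdef]; linarith
  have hSn : S < √n := by
    have : √n * (e1 + e2) < √n * 1 := by gcongr
    have := Real.sqrt_nonneg (D : ℝ)
    rw [hSdef]; linarith
  have hS0 : 0 ≤ S := by linarith
  have u1 := gordon_upper hG (hi := √n * (1 + e1 + e2)) (hi' := √n + √D + S)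
    (by rw [hSdef]; linarith)
  have l1 := gordon_lower hG (lo := √n * (1 - e1 - e2)) (lo' := √n - √D - S)
    (by rw [hSdef]; linarith)
  have u2 := tail_upper hn hD hS0
  have l2 := tail_lower hn hD hS0 hSn
  have hnum := numeric_bound hy hS
  rw [hye] at hnum
  have u3 : stdG κ0 {z | ∃ i, √n * (1 + e1 + e2) ≤ ‖∑ k, z k • α i k‖} ≤
      ENNReal.ofReal (2 * Real.exp (-S ^ 2 / 4)) := by
    refine u1.trans ?_
    rw [ENNReal.ofReal_mul (by norm_num)]
    refine mul_le_mul' (by simp) ?_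
    exact (ENNReal.le_ofReal_iff_toReal_le (measure_ne_top _ _) (Real.exp_pos _).le).2 u2
  have l3 : stdG κ0 {z | ∃ i, ‖∑ k, z k • α i k‖ ≤ √n * (1 - e1 - e2)} ≤
      ENNReal.ofReal (2 * (Real.exp (-(0.4 * S) ^ 2) + Real.exp (-(0.6 * S) ^ 2 / 2))) := by
    refine l1.trans ?_
    rw [ENNReal.ofReal_mul (by norm_num)]
    refine mul_le_mul' (by simp) ?_
    exact (ENNReal.le_ofReal_iff_toReal_le (measure_ne_top _ _) (by positivity)).2 l2
  calc _ ≤ stdG κ0 ({z | ∃ i, √n * (1 + e1 + e2) ≤ ‖∑ k, z k • α i k‖} ∪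
        {z | ∃ i, ‖∑ k, z k • α i k‖ ≤ √n * (1 - e1 - e2)}) := by
        refine measure_mono ?_
        rintro z ⟨i, h | h⟩
        · exact Or.inr ⟨i, h⟩
        · exact Or.inl ⟨i, h⟩
    _ ≤ _ := measure_union_le _ _
    _ ≤ _ := add_le_add u3 l3
    _ = _ := (ENNReal.ofReal_add (by positivity) (by positivity)).symm
    _ ≤ _ := ENNReal.ofReal_le_ofReal hnum
end

/-! ### Covariances along the interpolation path -/

lemma GordonPair.comp {κ0 ι ι' : Type*} [Fintype κ0] {n D : ℕ}
    {α : ι → κ0 → EuclideanSpace ℝ (Fin n)} {τ : ι → EuclideanSpace ℝ (Fin D)}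
    (h : GordonPair α τ) (f : ι' → ι) : GordonPair (fun i => α (f i)) (fun i => τ (f i)) :=
  ⟨fun _ => h.iso _, fun _ => h.unit _, fun _ _ => h.cross _ _⟩

/-- The deviation bound for sequences, by exhausting with finite families. -/
theorem gordon_seq {κ0 : Type*} [Fintype κ0] [DecidableEq κ0] {n D : ℕ}
    {α : ℕ → κ0 → EuclideanSpace ℝ (Fin n)} {τ : ℕ → EuclideanSpace ℝ (Fin D)}
    (hG : GordonPair α τ) (hn : 0 < n) (hD : 0 < D) {e1 e2 : ℝ} {q : ℕ}
    (he1 : 0 ≤ e1) (he2 : 0 ≤ e2) (he12 : e1 + e2 < 1) (hq : 3 ≤ q) (hDq : D ≤ q + 1)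
    (hqn : (q : ℝ) ≤ e1 ^ 2 * n / 2) (hbig : 3 * Real.exp (-(n * e2 ^ 2 / 8)) < 1) :
    stdG κ0 {z | ∃ i, ‖∑ k, z k • α i k‖ < √n * (1 - e1 - e2) ∨
        √n * (1 + e1 + e2) < ‖∑ k, z k • α i k‖} ≤
      ENNReal.ofReal (3 * Real.exp (-(n * e2 ^ 2 / 8))) := by
  set s : ℕ → Set (κ0 → ℝ) := fun N => {z | ∃ i : Fin N,
    ‖∑ k, z k • α i k‖ ≤ √n * (1 - e1 - e2) ∨ √n * (1 + e1 + e2) ≤ ‖∑ k, z k • α i k‖} with hs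
  have hmono : Monotone s := by
    rintro N M hNM z ⟨i, hi⟩
    exact ⟨Fin.castLE hNM i, hi⟩
  have hsub : {z | ∃ i, ‖∑ k, z k • α i k‖ < √n * (1 - e1 - e2) ∨
        √n * (1 + e1 + e2) < ‖∑ k, z k • α i k‖} ⊆ ⋃ N, s N := by
    rintro z ⟨i, hi⟩
    exact Set.mem_iUnion.2 ⟨i + 1, ⟨i, Nat.lt_succ_self i⟩, hi.imp le_of_lt le_of_lt⟩
  refine (measure_mono hsub).trans ?_
  rw [hmono.measure_iUnion]
  exact iSup_le fun N => gordon_both (hG.comp fun i : Fin N => (i : ℕ)) hn hD he1 he2 he12 hq hDq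
    hqn hbig

section geom
variable {n p : ℕ}

/-- Coefficients of `G w + P ((cos t - 1) a G v + (sin t) a g)`, with `a = ⟨v, w⟩`, as a linear
function of the Gaussian entries `(G, g)`. -/
def alphaOf (P : EuclideanSpace ℝ (Fin n) →ₗ[ℝ] EuclideanSpace ℝ (Fin n))
    (v : EuclideanSpace ℝ (Fin p)) (t : ℝ) (w : EuclideanSpace ℝ (Fin p)) :
    (Fin n × Fin p) ⊕ Fin n → EuclideanSpace ℝ (Fin n)
  | Sum.inl (r, c) => w c • EuclideanSpace.single r 1 +
      ((Real.cos t - 1) * inner ℝ v w * v c) • P (EuclideanSpace.single r 1)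
  | Sum.inr r => (Real.sin t * inner ℝ v w) • P (EuclideanSpace.single r 1)

/-- The unit vector `(w + (cos t - 1) a v, a sin t)`, written in an orthonormal basis of a
subspace containing `v` and `w`. -/
def tauOf {U : Submodule ℝ (EuclideanSpace ℝ (Fin p))} {d : ℕ} (b : OrthonormalBasis (Fin d) ℝ U)
    (v : EuclideanSpace ℝ (Fin p)) (t : ℝ) (w : EuclideanSpace ℝ (Fin p)) :
    EuclideanSpace ℝ (Fin (d + 1)) :=
  WithLp.toLp 2 (Fin.cons (Real.sin t * inner ℝ v w)
    fun k => inner ℝ (b k : EuclideanSpace ℝ (Fin p)) (w + ((Real.cos t - 1) * inner ℝ v w) • v))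

lemma tauOf_inner {U : Submodule ℝ (EuclideanSpace ℝ (Fin p))} {d : ℕ}
    (b : OrthonormalBasis (Fin d) ℝ U) {v : EuclideanSpace ℝ (Fin p)} (hv : ‖v‖ = 1) (hvU : v ∈ U)
    (t t' : ℝ) {w w' : EuclideanSpace ℝ (Fin p)} (hw : w ∈ U) (hw' : w' ∈ U) :
    inner ℝ (tauOf b v t w) (tauOf b v t' w') = inner ℝ w w' -
      inner ℝ v w * inner ℝ v w' * (1 - (Real.cos t * Real.cos t' + Real.sin t * Real.sin t')) := by
  have hm : w + ((Real.cos t - 1) * inner ℝ v w) • v ∈ U := U.add_mem hw (U.smul_mem _ hvU)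
  have hm' : w' + ((Real.cos t' - 1) * inner ℝ v w') • v ∈ U :=
    U.add_mem hw' (U.smul_mem _ hvU)
  have hsum := b.sum_inner_mul_inner ⟨_, hm⟩ ⟨_, hm'⟩
  simp only [Submodule.coe_inner] at hsum
  have hvv : inner ℝ v v = (1 : ℝ) := by rw [real_inner_self_eq_norm_sq, hv]; norm_num
  have e : inner ℝ (tauOf b v t w) (tauOf b v t' w') =
      (Real.sin t * inner ℝ v w) * (Real.sin t' * inner ℝ v w') +
      inner ℝ (w + ((Real.cos t - 1) * inner ℝ v w) • v)
        (w' + ((Real.cos t' - 1) * inner ℝ v w') • v) := by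
    rw [← hsum, PiLp.inner_apply, Fin.sum_univ_succ]
    simp only [tauOf, Fin.cons_zero, Fin.cons_succ, RCLike.inner_apply, conj_trivial]
    congr 1
    · ring
    · refine Finset.sum_congr rfl fun k _ => ?_
      rw [real_inner_comm (w + ((Real.cos t - 1) * inner ℝ v w) • v), mul_comm]
  rw [e]
  simp only [inner_add_left, inner_add_right, inner_smul_left, inner_smul_right, hvv,
    conj_trivial, real_inner_comm v w]
  ring

variable {P : EuclideanSpace ℝ (Fin n) →ₗ[ℝ] EuclideanSpace ℝ (Fin n)}

/-- Bilinear covariance of the process at two parameters: only the component seen by `P` feels `t`. -/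
lemma alphaOf_cov (hsym : ∀ x y, inner ℝ (P x) y = inner ℝ x (P y))
    {v : EuclideanSpace ℝ (Fin p)} (hv : ‖v‖ = 1) (t t' : ℝ)
    (w w' : EuclideanSpace ℝ (Fin p)) (hid : ∀ x, P (P x) = P x)
    (x y : EuclideanSpace ℝ (Fin n)) :
    ∑ k, inner ℝ x (alphaOf P v t w k) * inner ℝ y (alphaOf P v t' w' k) =
      inner ℝ w w' * inner ℝ x y - inner ℝ v w * inner ℝ v w' *
        (1 - (Real.cos t * Real.cos t' + Real.sin t * Real.sin t')) * inner ℝ (P x) (P y) := by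
  have hP : ∀ (x : EuclideanSpace ℝ (Fin n)) r,
      inner ℝ x (P (EuclideanSpace.single r 1)) = (P x) r := by
    intro x r
    rw [← hsym]; simp [EuclideanSpace.inner_single_right]
  have hvv : ∑ c, v c * v c = 1 := by
    have := real_inner_self_eq_norm_sq v
    rw [hv, PiLp.inner_apply] at this
    simpa [sq] using this
  have hvw : ∑ c, v c * w c = inner ℝ v w := by
    rw [PiLp.inner_apply]; simp [mul_comm]
  have hvw' : ∑ c, v c * w' c = inner ℝ v w' := by
    rw [PiLp.inner_apply]; simp [mul_comm]
  have hww : ∑ c, w c * w' c = inner ℝ w w' := by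
    rw [PiLp.inner_apply]; simp [mul_comm]
  have hxy : ∑ r, x r * y r = inner ℝ x y := by
    rw [PiLp.inner_apply]; simp [mul_comm]
  have hxPy : ∑ r, x r * P y r = inner ℝ (P x) (P y) := by
    rw [hsym, hid, PiLp.inner_apply]; simp [mul_comm]
  have hPxy : ∑ r, P x r * y r = inner ℝ (P x) (P y) := by
    rw [← hsym, hid, PiLp.inner_apply]; simp [mul_comm]
  have hPP : ∑ r, P x r * P y r = inner ℝ (P x) (P y) := by
    rw [PiLp.inner_apply]; simp [mul_comm]
  rw [Fintype.sum_sum_type, Fintype.sum_prod_type]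
  simp only [alphaOf, inner_add_right, inner_smul_right, hP, EuclideanSpace.inner_single_right,
    conj_trivial, one_mul]
  set a := inner ℝ v w
  set a' := inner ℝ v w'
  have e1 : ∀ r, ∑ c, (w c * x r + (Real.cos t - 1) * a * v c * P x r) *
      (w' c * y r + (Real.cos t' - 1) * a' * v c * P y r) =
      (x r * y r) * inner ℝ w w' + (x r * P y r) * ((Real.cos t' - 1) * a' * a) +
      (P x r * y r) * ((Real.cos t - 1) * a * a') +
      (P x r * P y r) * ((Real.cos t - 1) * a * ((Real.cos t' - 1) * a')) := by
    intro r
    calc _ = (x r * y r) * ∑ c, w c * w' c +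
          (x r * P y r) * ((Real.cos t' - 1) * a' * ∑ c, v c * w c) +
          (P x r * y r) * ((Real.cos t - 1) * a * ∑ c, v c * w' c) +
          (P x r * P y r) * ((Real.cos t - 1) * a * ((Real.cos t' - 1) * a') * ∑ c, v c * v c) := by
            simp only [Finset.mul_sum, ← Finset.sum_add_distrib]
            refine Finset.sum_congr rfl fun c _ => ?_
            ring
      _ = _ := by rw [hvv, hvw, hvw', hww, mul_one]
  have e2 : ∑ r, Real.sin t * a * P x r * (Real.sin t' * a' * P y r) =
      Real.sin t * a * (Real.sin t' * a') * inner ℝ (P x) (P y) := by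
    rw [← hPP, Finset.mul_sum]
    refine Finset.sum_congr rfl fun c _ => ?_
    ring
  simp_rw [e1]
  rw [e2]
  simp only [Finset.sum_add_distrib, ← Finset.sum_mul]
  rw [hxy, hxPy, hPxy, hPP]
  ring

/-- Cauchy–Schwarz applied separately on the range and on the kernel of an orthogonal projection. -/
lemma proj_split (hsym : ∀ x y, inner ℝ (P x) y = inner ℝ x (P y)) (hid : ∀ x, P (P x) = P x)
    {x y : EuclideanSpace ℝ (Fin n)} (hx : ‖x‖ ≤ 1) (hy : ‖y‖ ≤ 1) :
    |inner ℝ x y - inner ℝ (P x) (P y)| + |inner ℝ (P x) (P y)| ≤ 1 := by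
  have h1 : ∀ x y, inner ℝ x y - inner ℝ (P x) (P y) = inner ℝ (x - P x) (y - P y) := by
    intro x y
    have e1 : inner ℝ x (P y) = inner ℝ (P x) (P y) := by rw [hsym, hid]
    have e2 : inner ℝ (P x) y = inner ℝ (P x) (P y) := by rw [← hsym (P x), hid]
    rw [inner_sub_left, inner_sub_right, inner_sub_right, e1, e2]; ring
  have h2 : ∀ x, ‖x - P x‖ ^ 2 + ‖P x‖ ^ 2 = ‖x‖ ^ 2 := by
    intro x
    have := h1 x x
    simp only [real_inner_self_eq_norm_sq] at this
    linarith
  rw [h1]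
  have a1 := abs_real_inner_le_norm (x - P x) (y - P y)
  have a2 := abs_real_inner_le_norm (P x) (P y)
  have hx2 := h2 x
  have hy2 := h2 y
  nlinarith [sq_nonneg (‖x - P x‖ - ‖y - P y‖), sq_nonneg (‖P x‖ - ‖P y‖), norm_nonneg x,
    norm_nonneg y]

/-- The interpolated design and the decoupled process satisfy the comparison hypotheses.
Here `⟨v, w⟩ ≥ 0` is what makes the correction term have the right sign. -/
lemma gordonPair_path (hsym : ∀ x y, inner ℝ (P x) y = inner ℝ x (P y)) (hid : ∀ x, P (P x) = P x)
    {U : Submodule ℝ (EuclideanSpace ℝ (Fin p))} {d : ℕ}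
    (b : OrthonormalBasis (Fin d) ℝ U) {v : EuclideanSpace ℝ (Fin p)} (hv : ‖v‖ = 1) (hvU : v ∈ U)
    {ι : Type*} (t : ι → ℝ) (w : ι → EuclideanSpace ℝ (Fin p)) (hwU : ∀ i, w i ∈ U)
    (hw : ∀ i, ‖w i‖ = 1) (hvw : ∀ i, 0 ≤ inner ℝ v (w i)) :
    GordonPair (fun i => alphaOf P v (t i) (w i)) (fun i => tauOf b v (t i) (w i)) := by
  have hww : ∀ i, inner ℝ (w i) (w i) = (1 : ℝ) := fun i => by
    rw [real_inner_self_eq_norm_sq, hw]; norm_num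
  refine ⟨fun i x y => ?_, fun i => ?_, fun i j x y hx hy => ?_⟩
  · rw [alphaOf_cov hsym hv _ _ _ _ hid, hww]
    have := Real.cos_sq_add_sin_sq (t i)
    rw [← sq (Real.cos _), ← sq (Real.sin _), this]; ring
  · have h := tauOf_inner b hv hvU (t i) (t i) (hwU i) (hwU i)
    have h2 := Real.cos_sq_add_sin_sq (t i)
    rw [← sq (Real.cos _), ← sq (Real.sin _), h2, hww, real_inner_self_eq_norm_sq] at h
    have h3 : ‖tauOf b v (t i) (w i)‖ ^ 2 = 1 := by rw [h]; ring
    nlinarith [norm_nonneg (tauOf b v (t i) (w i))]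
  · rw [alphaOf_cov hsym hv _ _ _ _ hid, tauOf_inner b hv hvU _ _ (hwU i) (hwU j)]
    have hs := proj_split hsym hid hx hy
    set β := inner ℝ (P x) (P y)
    set γ := inner ℝ x y - β with hγ
    have exy : inner ℝ x y = γ + β := by rw [hγ]; ring
    rw [exy]
    have hle : inner ℝ (w i) (w j) ≤ (1 : ℝ) := by
      have := real_inner_le_norm (w i) (w j)
      rwa [hw, hw, one_mul] at this
    have hcos : 0 ≤ 1 - (Real.cos (t i) * Real.cos (t j) + Real.sin (t i) * Real.sin (t j)) := by
      rw [← Real.cos_sub]; linarith [Real.cos_le_one (t i - t j)]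
    have hcorr := mul_nonneg (mul_nonneg (hvw i) (hvw j)) hcos
    set K := inner ℝ v (w i) * inner ℝ v (w j) *
      (1 - (Real.cos (t i) * Real.cos (t j) + Real.sin (t i) * Real.sin (t j)))
    set ρ := inner ℝ (w i) (w j)
    have h1 : (1 - ρ) * γ ≤ (1 - ρ) * |γ| :=
      mul_le_mul_of_nonneg_left (le_abs_self _) (by linarith)
    have h2 : (1 - ρ + K) * β ≤ (1 - ρ + K) * |β| :=
      mul_le_mul_of_nonneg_left (le_abs_self _) (by linarith)
    have h3 : K * |γ| ≥ 0 := mul_nonneg hcorr (abs_nonneg _)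
    have h4 : (1 - ρ + K) * (|γ| + |β|) ≤ (1 - ρ + K) * 1 :=
      mul_le_mul_of_nonneg_left hs (by linarith)
    nlinarith

end geom

/-! ### The interpolated design as a linear Gaussian process -/

section ident
variable {n p : ℕ}

lemma projPerp_add (e x y : Fin n → ℝ) : projPerp e (x + y) = projPerp e x + projPerp e y := by
  funext i
  simp only [projPerp, projOn, dot, Pi.add_apply, mul_add, Finset.sum_add_distrib]
  ring

lemma projPerp_smul (e : Fin n → ℝ) (c : ℝ) (x : Fin n → ℝ) :
    projPerp e (c • x) = c • projPerp e x := by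
  funext i
  have : ∑ i, e i * (c * x i) = c * ∑ i, e i * x i := by
    rw [Finset.mul_sum]; exact Finset.sum_congr rfl fun _ _ => by ring
  simp only [projPerp, projOn, dot, Pi.smul_apply, smul_eq_mul, this]
  ring

/-- `projPerp e` as a linear endomorphism of Euclidean space. -/
def perpL (e : Fin n → ℝ) : EuclideanSpace ℝ (Fin n) →ₗ[ℝ] EuclideanSpace ℝ (Fin n) where
  toFun x := WithLp.toLp 2 (projPerp e x.ofLp)
  map_add' x y := by rw [WithLp.ofLp_add, projPerp_add]; rfl
  map_smul' c x := by rw [WithLp.ofLp_smul, projPerp_smul]; rfl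

lemma perpL_apply (e : Fin n → ℝ) (x : EuclideanSpace ℝ (Fin n)) (i : Fin n) :
    perpL e x i = projPerp e x.ofLp i := rfl

lemma inner_eq_dot {q : ℕ} (x y : EuclideanSpace ℝ (Fin q)) : inner ℝ x y = dot x.ofLp y.ofLp := by
  rw [PiLp.inner_apply]; simp [dot, mul_comm]

lemma l2_sq {q : ℕ} (x : Fin q → ℝ) : l2 x ^ 2 = dot x x := by
  rw [l2, Real.sq_sqrt (Finset.sum_nonneg fun _ _ => sq_nonneg _)]
  simp [dot, sq]

lemma norm_eq_l2 {q : ℕ} (x : EuclideanSpace ℝ (Fin q)) : ‖x‖ = l2 x.ofLp := by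
  rw [EuclideanSpace.norm_eq, l2]; simp

lemma dot_projPerp (e x y : Fin n → ℝ) :
    dot (projPerp e x) y = dot x y - dot e x * dot e y / l2 e ^ 2 := by
  have : ∀ i, projPerp e x i * y i = x i * y i - dot e x / l2 e ^ 2 * (e i * y i) := by
    intro i; simp only [projPerp, projOn]; ring
  simp only [dot] at *
  simp only [this, Finset.sum_sub_distrib, ← Finset.mul_sum]
  ring

lemma dot_comm' {q : ℕ} (x y : Fin q → ℝ) : dot x y = dot y x := by
  simp [dot, mul_comm]

lemma perpL_sym (e : Fin n → ℝ) (x y : EuclideanSpace ℝ (Fin n)) :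
    inner ℝ (perpL e x) y = inner ℝ x (perpL e y) := by
  rw [inner_eq_dot, inner_eq_dot, dot_comm' x.ofLp]
  change dot (projPerp e _) _ = dot (projPerp e _) _
  rw [dot_projPerp, dot_projPerp, dot_comm' x.ofLp]; ring

lemma perpL_idem (e : Fin n → ℝ) (x : EuclideanSpace ℝ (Fin n)) :
    perpL e (perpL e x) = perpL e x := by
  have h : dot e (projPerp e x.ofLp) = 0 ∨ l2 e ^ 2 = 0 := by
    by_cases h0 : l2 e ^ 2 = 0
    · exact Or.inr h0
    · left
      rw [dot_comm', dot_projPerp, ← l2_sq, dot_comm' x.ofLp]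
      rw [mul_div_assoc, div_self h0]; ring
  ext i
  rw [perpL_apply]
  change projPerp e (projPerp e x.ofLp) i = projPerp e x.ofLp i
  rw [projPerp, projOn]
  rcases h with h | h <;> simp [h]

lemma sum_smul_single (x : Fin n → ℝ) :
    ∑ r, x r • EuclideanSpace.single r (1 : ℝ) = WithLp.toLp 2 x := by
  ext i
  simp [Finset.sum_apply, Pi.single_apply]

lemma sum_alphaOf (P : EuclideanSpace ℝ (Fin n) →ₗ[ℝ] EuclideanSpace ℝ (Fin n))
    (v w : EuclideanSpace ℝ (Fin p)) (t : ℝ) (z : (Fin n × Fin p) ⊕ Fin n → ℝ) :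
    ∑ k, z k • alphaOf P v t w k =
      WithLp.toLp 2 (mulVec' (fun i l => z (Sum.inl (i, l))) w.ofLp) +
      ((Real.cos t - 1) * inner ℝ v w) •
        P (WithLp.toLp 2 (mulVec' (fun i l => z (Sum.inl (i, l))) v.ofLp)) +
      (Real.sin t * inner ℝ v w) • P (WithLp.toLp 2 fun i => z (Sum.inr i)) := by
  rw [Fintype.sum_sum_type, Fintype.sum_prod_type]
  simp only [← sum_smul_single (mulVec' _ _), ← sum_smul_single (fun i => z (Sum.inr i)), map_sum,
    map_smul, mulVec', alphaOf]
  congr 1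
  · rw [Finset.smul_sum, ← Finset.sum_add_distrib]
    refine Finset.sum_congr rfl fun r _ => ?_
    simp only [smul_add, smul_smul, Finset.sum_add_distrib, ← Finset.sum_smul, Finset.mul_sum]
    congr 2
    exact Finset.sum_congr rfl fun _ _ => by ring
  · rw [Finset.smul_sum]
    exact Finset.sum_congr rfl fun r _ => by rw [smul_smul, smul_smul, mul_comm]

lemma mulVec_path (X : Fin n → Fin p → ℝ) (Sig : Matrix (Fin p) (Fin p) ℝ) (a0 : Fin p → ℝ)
    (e g : Fin n → ℝ) (t : ℝ) (u : Fin p → ℝ) (i : Fin n) :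
    mulVec' (XPath X Sig a0 e g t) u i = mulVec' X u i + dot a0 u *
      ((Real.cos t - 1) * projPerp e (z0vec X Sig a0) i + Real.sin t * projPerp e g i) := by
  have h : ∀ j, XPath X Sig a0 e g t i j * u j = X i j * u j + (a0 j * u j) *
      ((Real.cos t - 1) * projPerp e (z0vec X Sig a0) i + Real.sin t * projPerp e g i) := by
    intro j
    simp only [XPath, z0Path, projPerp]; ring
  simp only [mulVec', dot, h, Finset.sum_add_distrib, Finset.sum_mul]

lemma mulVec'_mul (G : Fin n → Fin p → ℝ) (A : Matrix (Fin p) (Fin p) ℝ) (u : Fin p → ℝ) :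
    mulVec' (fun i j => ∑ l, G i l * A l j) u = mulVec' G (A.mulVec u) := by
  funext i
  simp only [mulVec', Matrix.mulVec, dotProduct, Finset.sum_mul, Finset.mul_sum]
  rw [Finset.sum_comm]
  exact Finset.sum_congr rfl fun _ _ => Finset.sum_congr rfl fun _ _ => by ring

/-- The interpolated design applied to `u`, as a function of the underlying standard Gaussian
entries, is the linear process with coefficients `alphaOf`. -/
lemma path_eq (A Sig : Matrix (Fin p) (Fin p) ℝ) (a0 u : Fin p → ℝ) (e : Fin n → ℝ) (t : ℝ)
    {C : ℝ} (hC : C ≠ 0) {v w : EuclideanSpace ℝ (Fin p)} (hw : w.ofLp = A.mulVec u)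
    (hv : v.ofLp = C • A.mulVec (u0vec Sig a0)) (hvw : inner ℝ v w = C⁻¹ * dot a0 u)
    (z : (Fin n × Fin p) ⊕ Fin n → ℝ) :
    ‖∑ k, z k • alphaOf (perpL e) v t w k‖ =
      l2 (mulVec' (XPath (fun i j => ∑ l, z (Sum.inl (i, l)) * A l j) Sig a0 e
        (fun i => C⁻¹ * z (Sum.inr i)) t) u) := by
  rw [sum_alphaOf, norm_eq_l2]
  congr 1
  funext i
  rw [mulVec_path, z0vec, mulVec'_mul, mulVec'_mul, hvw, hw, hv]
  have hG : mulVec' (fun i l => z (Sum.inl (i, l))) (C • A.mulVec (u0vec Sig a0)) =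
      C • mulVec' (fun i l => z (Sum.inl (i, l))) (A.mulVec (u0vec Sig a0)) := by
    funext i
    simp only [mulVec', Pi.smul_apply, smul_eq_mul, Finset.mul_sum]
    exact Finset.sum_congr rfl fun _ _ => by ring
  have hg : (fun i => C⁻¹ * z (Sum.inr i)) = C⁻¹ • fun i => z (Sum.inr i) := rfl
  rw [hG, hg, projPerp_smul]
  simp only [PiLp.add_apply, PiLp.smul_apply, perpL_apply, projPerp_smul, Pi.smul_apply,
    smul_eq_mul]
  field_simp
  ring

lemma dot_mulVec_gram (A : Matrix (Fin p) (Fin p) ℝ) (x y : Fin p → ℝ) :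
    dot (A.mulVec x) (A.mulVec y) = dot x ((A.transpose * A).mulVec y) := by
  change (A.mulVec x) ⬝ᵥ (A.mulVec y) = x ⬝ᵥ _
  rw [← Matrix.mulVec_mulVec, Matrix.dotProduct_mulVec x, Matrix.vecMul_transpose]

lemma quadForm_eq (M : Matrix (Fin p) (Fin p) ℝ) (x : Fin p → ℝ) :
    quadForm M x = dot x (M.mulVec x) := by
  simp only [quadForm, dot, Matrix.mulVec, dotProduct, Finset.mul_sum, mul_assoc]

variable {Sig : Matrix (Fin p) (Fin p) ℝ} {a0 : Fin p → ℝ}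

lemma quadA0_pos (hSig : Sig.PosDef) (ha0 : a0 ≠ 0) : 0 < quadA0 Sig a0 := by
  have := hSig.inv.dotProduct_mulVec_pos ha0
  simpa [quadA0, dot, dotProduct] using this

lemma Sig_u0 (hSig : Sig.PosDef) :
    Sig.mulVec (u0vec Sig a0) = (quadA0 Sig a0)⁻¹ • a0 := by
  have h : u0vec Sig a0 = (quadA0 Sig a0)⁻¹ • Sig⁻¹.mulVec a0 := by
    funext j; simp [u0vec, div_eq_inv_mul]
  rw [h, Matrix.mulVec_smul, Matrix.mulVec_mulVec,
    Matrix.mul_nonsing_inv _ ((Matrix.isUnit_iff_isUnit_det _).1 hSig.isUnit), Matrix.one_mulVec]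

lemma dot_a0_u0 (hSig : Sig.PosDef) (ha0 : a0 ≠ 0) : dot a0 (u0vec Sig a0) = 1 := by
  have h : ∀ j, a0 j * u0vec Sig a0 j = a0 j * Sig⁻¹.mulVec a0 j / quadA0 Sig a0 := by
    intro j; simp [u0vec, mul_div_assoc]
  simp only [dot, h, ← Finset.sum_div]
  exact div_self (quadA0_pos hSig ha0).ne'

lemma C0_pos (hSig : Sig.PosDef) (ha0 : a0 ≠ 0) : 0 < C0 Sig a0 :=
  Real.sqrt_pos.2 (quadA0_pos hSig ha0)

lemma C0_sq (hSig : Sig.PosDef) (ha0 : a0 ≠ 0) : C0 Sig a0 ^ 2 = quadA0 Sig a0 :=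
  Real.sq_sqrt (quadA0_pos hSig ha0).le

/-- The unit vector `C₀ A u₀`, the image of the direction `a₀` in whitened coordinates. -/
def vdir (A Sig : Matrix (Fin p) (Fin p) ℝ) (a0 : Fin p → ℝ) : EuclideanSpace ℝ (Fin p) :=
  WithLp.toLp 2 (C0 Sig a0 • A.mulVec (u0vec Sig a0))

lemma inner_vdir (hSig : Sig.PosDef) (ha0 : a0 ≠ 0) {A : Matrix (Fin p) (Fin p) ℝ}
    (hA : A.transpose * A = Sig) (u : Fin p → ℝ) :
    inner ℝ (vdir A Sig a0) (WithLp.toLp 2 (A.mulVec u)) = (C0 Sig a0)⁻¹ * dot a0 u := by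
  have hC := (C0_pos hSig ha0).ne'
  have e : vdir A Sig a0 = C0 Sig a0 • WithLp.toLp 2 (A.mulVec (u0vec Sig a0)) := rfl
  rw [e, inner_smul_left, inner_eq_dot, dot_comm', dot_mulVec_gram, hA, Sig_u0 hSig,
    ← C0_sq hSig ha0, dot_comm' u]
  have : dot (((C0 Sig a0) ^ 2)⁻¹ • a0) u = ((C0 Sig a0) ^ 2)⁻¹ * dot a0 u := by
    simp [dot, Finset.mul_sum, mul_assoc]
  rw [this]
  simp only [conj_trivial]
  field_simp

lemma norm_vdir (hSig : Sig.PosDef) (ha0 : a0 ≠ 0) {A : Matrix (Fin p) (Fin p) ℝ}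
    (hA : A.transpose * A = Sig) : ‖vdir A Sig a0‖ = 1 := by
  have hC := (C0_pos hSig ha0).ne'
  have e : vdir A Sig a0 = C0 Sig a0 • WithLp.toLp 2 (A.mulVec (u0vec Sig a0)) := rfl
  have h : ‖vdir A Sig a0‖ ^ 2 = 1 := by
    rw [← real_inner_self_eq_norm_sq]
    nth_rewrite 2 [e]
    rw [inner_smul_right, inner_vdir hSig ha0 hA, dot_a0_u0 hSig ha0]
    field_simp
  nlinarith [norm_nonneg (vdir A Sig a0)]

lemma norm_whiten {A : Matrix (Fin p) (Fin p) ℝ} (hA : A.transpose * A = Sig) {u : Fin p → ℝ}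
    (hu : quadForm Sig u = 1) : ‖(WithLp.toLp 2 (A.mulVec u) : EuclideanSpace ℝ (Fin p))‖ = 1 := by
  have h : ‖(WithLp.toLp 2 (A.mulVec u) : EuclideanSpace ℝ (Fin p))‖ ^ 2 = 1 := by
    rw [← real_inner_self_eq_norm_sq, inner_eq_dot, dot_mulVec_gram, hA, ← quadForm_eq, hu]
  nlinarith [norm_nonneg (WithLp.toLp 2 (A.mulVec u) : EuclideanSpace ℝ (Fin p))]

/-- The subspace of whitened vectors supported on `B`, enlarged by the direction of `a₀`. -/
def spanB (A Sig : Matrix (Fin p) (Fin p) ℝ) (a0 : Fin p → ℝ) (B : Finset (Fin p)) :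
    Submodule ℝ (EuclideanSpace ℝ (Fin p)) :=
  Submodule.span ℝ ((insert (vdir A Sig a0)
    (B.image fun j => (WithLp.toLp 2 (A.col j) : EuclideanSpace ℝ (Fin p))) :
      Finset (EuclideanSpace ℝ (Fin p))) : Set (EuclideanSpace ℝ (Fin p)))

lemma finrank_spanB (A Sig : Matrix (Fin p) (Fin p) ℝ) (a0 : Fin p → ℝ) (B : Finset (Fin p)) :
    Module.finrank ℝ (spanB A Sig a0 B) ≤ B.card + 1 :=
  (finrank_span_finset_le_card _).trans ((Finset.card_insert_le _ _).trans
    (Nat.succ_le_succ Finset.card_image_le))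

lemma vdir_mem (A Sig : Matrix (Fin p) (Fin p) ℝ) (a0 : Fin p → ℝ) (B : Finset (Fin p)) :
    vdir A Sig a0 ∈ spanB A Sig a0 B :=
  Submodule.subset_span (by simp)

lemma whiten_mem (A Sig : Matrix (Fin p) (Fin p) ℝ) (a0 : Fin p → ℝ) {B : Finset (Fin p)}
    {u : Fin p → ℝ} (hu : suppF u ⊆ B) :
    (WithLp.toLp 2 (A.mulVec u) : EuclideanSpace ℝ (Fin p)) ∈ spanB A Sig a0 B := by
  have e : (WithLp.toLp 2 (A.mulVec u) : EuclideanSpace ℝ (Fin p)) =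
      ∑ j ∈ B, u j • WithLp.toLp 2 (A.col j) := by
    have h0 : ∀ j ∉ B, u j • (WithLp.toLp 2 (A.col j) : EuclideanSpace ℝ (Fin p)) = 0 := by
      intro j hj
      have : u j = 0 := by
        by_contra h
        exact hj (hu (by simp [suppF, h]))
      simp [this]
    rw [Finset.sum_subset (Finset.subset_univ B) fun j _ hj => h0 j hj]
    ext i
    simp [Matrix.mulVec, dotProduct, Finset.sum_apply, mul_comm, Matrix.col]
  rw [e]
  refine Submodule.sum_mem _ fun j hj => Submodule.smul_mem _ _ (Submodule.subset_span ?_)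
  simp only [Finset.coe_insert, Finset.coe_image]
  exact Or.inr ⟨j, hj, rfl⟩

/-- Deviation bound for a fixed noise vector `e`, a fixed support set `B` and a sequence of
parameters `(t, u)`. -/
theorem path_seq (hSig : Sig.PosDef) (ha0 : a0 ≠ 0) {A : Matrix (Fin p) (Fin p) ℝ}
    (hA : A.transpose * A = Sig) (e : Fin n → ℝ) (B : Finset (Fin p)) (t : ℕ → ℝ)
    (u : ℕ → Fin p → ℝ) (hu : ∀ i, quadForm Sig (u i) = 1) (huB : ∀ i, suppF (u i) ⊆ B)
    (hua : ∀ i, 0 ≤ dot a0 (u i)) (hn : 0 < n) {e1 e2 : ℝ}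
    (he1 : 0 ≤ e1) (he2 : 0 ≤ e2) (he12 : e1 + e2 < 1) (hq : 2 ≤ B.card)
    (hqn : ((B.card + 1 : ℕ) : ℝ) ≤ e1 ^ 2 * n / 2)
    (hbig : 3 * Real.exp (-(n * e2 ^ 2 / 8)) < 1) :
    stdG ((Fin n × Fin p) ⊕ Fin n) {z | ∃ i,
      l2 (mulVec' (XPath (fun i j => ∑ l, z (Sum.inl (i, l)) * A l j) Sig a0 e
        (fun i => (C0 Sig a0)⁻¹ * z (Sum.inr i)) (t i)) (u i)) < √n * (1 - e1 - e2) ∨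
      √n * (1 + e1 + e2) < l2 (mulVec' (XPath (fun i j => ∑ l, z (Sum.inl (i, l)) * A l j) Sig a0 e
        (fun i => (C0 Sig a0)⁻¹ * z (Sum.inr i)) (t i)) (u i))} ≤
      ENNReal.ofReal (3 * Real.exp (-(n * e2 ^ 2 / 8))) := by
  have hP := gordonPair_path (perpL_sym e) (perpL_idem e)
    (stdOrthonormalBasis ℝ (spanB A Sig a0 B)) (norm_vdir hSig ha0 hA) (vdir_mem A Sig a0 B) t
    (fun i => WithLp.toLp 2 (A.mulVec (u i))) (fun i => whiten_mem A Sig a0 (huB i))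
    (fun i => norm_whiten hA (hu i)) (fun i => by
      rw [inner_vdir hSig ha0 hA]
      exact mul_nonneg (inv_nonneg.2 (C0_pos hSig ha0).le) (hua i))
  have := gordon_seq hP hn (Nat.succ_pos _) he1 he2 he12 (q := B.card + 1) (by omega)
    (by have := finrank_spanB A Sig a0 B; omega) hqn hbig
  simp only [path_eq A Sig a0 _ e _ (C0_pos hSig ha0).ne' (v := vdir A Sig a0) rfl rfl
    (inner_vdir hSig ha0 hA _)] at this
  exact this

end ident

/-! ### Law of the data and covering of the parameter set -/

section law
variable {n p : ℕ}

lemma stdG_curry : MeasurePreserving (fun (z : Fin n × Fin p → ℝ) i l => z (i, l))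
    (stdG (Fin n × Fin p))
    (Measure.pi fun _ : Fin n => Measure.pi fun _ : Fin p => gaussianReal 0 1) := by
  refine ⟨by fun_prop, ?_⟩
  have := Measure.infinitePi_map_curry (ι := Fin n) (κ := Fin p) (X := ℝ)
    (fun _ _ => gaussianReal 0 1)
  simp only [Measure.infinitePi_eq_pi] at this
  exact this

lemma stdG_scale {c v : ℝ} (hv : c ^ 2 = v) : MeasurePreserving (fun (z : Fin n → ℝ) i => c * z i)
    (stdG (Fin n)) (Measure.pi fun _ : Fin n => gaussianReal 0 (Real.toNNReal v)) := by
  refine ⟨by fun_prop, ?_⟩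
  have h := gaussianReal_map_const_mul (μ := 0) (v := 1) c
  have e : (⟨c ^ 2, sq_nonneg c⟩ : ℝ≥0) * 1 = Real.toNNReal v := by
    ext; simp [← hv, sq_nonneg]
  have h2 : Measure.map (c * ·) (gaussianReal 0 1) = gaussianReal 0 (Real.toNNReal v) := by
    rw [h, mul_zero]; exact congrArg _ e
  have h3 := Measure.pi_map_pi (μ := fun _ : Fin n => gaussianReal 0 1) (f := fun _ x => c * x)
    (fun _ => by fun_prop)
  rw [stdG, ← h2]
  exact h3

variable {Ω : Type} [MeasureSpace Ω] [IsProbabilityMeasure (volume : Measure Ω)]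
  {X : Ω → Fin n → Fin p → ℝ} {eps g : Ω → Fin n → ℝ}

/-- Fubini in the noise: a bad set all of whose sections at fixed noise have small probability
has small probability. -/
lemma law_bound {A : Matrix (Fin p) (Fin p) ℝ} {c v : ℝ} (hv : c ^ 2 = v)
    (hXm : Measurable X) (hX : Measure.map X volume =
      Measure.map (fun (G : Fin n → Fin p → ℝ) (i : Fin n) (j : Fin p) => ∑ l, G i l * A l j)
        (Measure.pi fun _ : Fin n => Measure.pi fun _ : Fin p => gaussianReal 0 1))
    (hem : Measurable eps) (hg : IsoGaussVec n v g)
    (hXeps : IndepFun X eps) (hgind : IndepFun (fun ω => (X ω, eps ω)) g)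
    {N : Set (((Fin n → Fin p → ℝ) × (Fin n → ℝ)) × (Fin n → ℝ))} (hN : MeasurableSet N)
    {δ : ℝ≥0∞} (hδ : ∀ e : Fin n → ℝ, stdG ((Fin n × Fin p) ⊕ Fin n)
      {z | ((fun i j => ∑ l, z (Sum.inl (i, l)) * A l j, e), fun i => c * z (Sum.inr i)) ∈ N} ≤ δ) :
    volume {ω | ((X ω, eps ω), g ω) ∈ N} ≤ δ := by
  have hgm := hg.1
  have hlaw : Measure.map (fun ω => ((X ω, eps ω), g ω)) volume =
      ((Measure.map X volume).prod (Measure.map eps volume)).prod (Measure.map g volume) := by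
    rw [(indepFun_iff_map_prod_eq_prod_map_map (hXm.prodMk hem).aemeasurable
      hgm.aemeasurable).1 hgind, (indepFun_iff_map_prod_eq_prod_map_map hXm.aemeasurable
      hem.aemeasurable).1 hXeps]
  have : IsProbabilityMeasure (Measure.map X volume) :=
    Measure.isProbabilityMeasure_map hXm.aemeasurable
  have : IsProbabilityMeasure (Measure.map eps volume) :=
    Measure.isProbabilityMeasure_map hem.aemeasurable
  have : IsProbabilityMeasure (Measure.map g volume) :=
    Measure.isProbabilityMeasure_map hgm.aemeasurable
  have hA : MeasurePreserving
      (fun (G : Fin n → Fin p → ℝ) (i : Fin n) (j : Fin p) => ∑ l, G i l * A l j)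
      (Measure.pi fun _ : Fin n => Measure.pi fun _ : Fin p => gaussianReal 0 1)
      (Measure.map X volume) := ⟨by fun_prop, hX.symm⟩
  have hc : MeasurePreserving (fun (z : Fin n → ℝ) i => c * z i)
      (stdG (Fin n)) (Measure.map g volume) := by
    rw [hg.2]; exact stdG_scale hv
  have hz := ((hA.comp stdG_curry).prod hc).comp (stdG_sum (Fin n × Fin p) (Fin n))
  have h1 := (MeasurePreserving.id (Measure.map eps volume)).prod hz
  have hassoc : MeasurePreserving
      (MeasurableEquiv.prodAssoc : ((Fin n → ℝ) × (Fin n → Fin p → ℝ)) × (Fin n → ℝ) ≃ᵐ _)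
      (((Measure.map eps volume).prod (Measure.map X volume)).prod (Measure.map g volume))
      ((Measure.map eps volume).prod ((Measure.map X volume).prod (Measure.map g volume))) :=
    ⟨MeasurableEquiv.measurable _, Measure.prodAssoc_prod⟩
  have h2 := ((Measure.measurePreserving_swap (μ := Measure.map eps volume)
    (ν := Measure.map X volume)).prod (MeasurePreserving.id (Measure.map g volume))).comp
      ((hassoc.symm _).comp h1)
  have hNv : volume {ω | ((X ω, eps ω), g ω) ∈ N} =
      Measure.map (fun ω => ((X ω, eps ω), g ω)) volume N :=
    (Measure.map_apply ((hXm.prodMk hem).prodMk hgm) hN).symm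
  rw [hNv, hlaw, ← h2.measure_preimage hN.nullMeasurableSet,
    Measure.prod_apply (h2.measurable hN)]
  calc _ ≤ ∫⁻ _, δ ∂(Measure.map eps volume) := lintegral_mono fun e => hδ e
    _ = δ := by simp

end law

section cover
variable {n p : ℕ} {Sig : Matrix (Fin p) (Fin p) ℝ} {a0 : Fin p → ℝ}

lemma measurable_path (t : ℝ) (u : Fin p → ℝ) :
    Measurable fun q : ((Fin n → Fin p → ℝ) × (Fin n → ℝ)) × (Fin n → ℝ) =>
      l2 (mulVec' (XPath q.1.1 Sig a0 q.1.2 q.2 t) u) := by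
  have : ∀ q : ((Fin n → Fin p → ℝ) × (Fin n → ℝ)) × (Fin n → ℝ),
      mulVec' (XPath q.1.1 Sig a0 q.1.2 q.2 t) u = fun i => mulVec' q.1.1 u i + dot a0 u *
      ((Real.cos t - 1) * projPerp q.1.2 (z0vec q.1.1 Sig a0) i +
        Real.sin t * projPerp q.1.2 q.2 i) :=
    fun q => funext fun i => mulVec_path _ _ _ _ _ _ _ _
  simp only [this]
  simp only [l2, mulVec', projPerp, projOn, z0vec, dot]
  fun_prop

lemma continuous_path (X : Fin n → Fin p → ℝ) (e g : Fin n → ℝ) :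
    Continuous fun q : ℝ × (Fin p → ℝ) => l2 (mulVec' (XPath X Sig a0 e g q.1) q.2) := by
  have : ∀ q : ℝ × (Fin p → ℝ),
      mulVec' (XPath X Sig a0 e g q.1) q.2 = fun i => mulVec' X q.2 i + dot a0 q.2 *
      ((Real.cos q.1 - 1) * projPerp e (z0vec X Sig a0) i + Real.sin q.1 * projPerp e g i) :=
    fun q => funext fun i => mulVec_path _ _ _ _ _ _ _ _
  simp only [this]
  simp only [l2, mulVec', dot]
  fun_prop

/-- For each support set `B`, a measurable set of realisations of `(X, ε, g)` that contains all
those violating the isometry on vectors supported in `B`, and is small for every fixed noise. -/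
lemma exists_bad (hSig : Sig.PosDef) (ha0 : a0 ≠ 0) {A : Matrix (Fin p) (Fin p) ℝ}
    (hA : A.transpose * A = Sig) (B : Finset (Fin p)) (hn : 0 < n) {e1 e2 : ℝ}
    (he1 : 0 ≤ e1) (he2 : 0 ≤ e2) (he12 : e1 + e2 < 1) (hq : 2 ≤ B.card)
    (hqn : ((B.card + 1 : ℕ) : ℝ) ≤ e1 ^ 2 * n / 2)
    (hbig : 3 * Real.exp (-(n * e2 ^ 2 / 8)) < 1) :
    ∃ N : Set (((Fin n → Fin p → ℝ) × (Fin n → ℝ)) × (Fin n → ℝ)), MeasurableSet N ∧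
      (∀ e : Fin n → ℝ, stdG ((Fin n × Fin p) ⊕ Fin n)
        {z | ((fun i j => ∑ l, z (Sum.inl (i, l)) * A l j, e),
          fun i => (C0 Sig a0)⁻¹ * z (Sum.inr i)) ∈ N} ≤
        ENNReal.ofReal (3 * Real.exp (-(n * e2 ^ 2 / 8)))) ∧
      ∀ X e g, ((X, e), g) ∉ N → ∀ (t : ℝ) (u : Fin p → ℝ), quadForm Sig u = 1 → suppF u ⊆ B →
        √n * (1 - e1 - e2) ≤ l2 (mulVec' (XPath X Sig a0 e g t) u) ∧
        l2 (mulVec' (XPath X Sig a0 e g t) u) ≤ √n * (1 + e1 + e2) := by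
  set K : Set (ℝ × (Fin p → ℝ)) :=
    {q | quadForm Sig q.2 = 1 ∧ suppF q.2 ⊆ B ∧ 0 ≤ dot a0 q.2} with hK
  -- the sign of `u` is irrelevant to the norm, so `⟨a₀, u⟩ ≥ 0` may be assumed
  have hred : ∀ (X : Fin n → Fin p → ℝ) (e g : Fin n → ℝ), (∀ q ∈ K,
        √n * (1 - e1 - e2) ≤ l2 (mulVec' (XPath X Sig a0 e g q.1) q.2) ∧
        l2 (mulVec' (XPath X Sig a0 e g q.1) q.2) ≤ √n * (1 + e1 + e2)) →
      ∀ (t : ℝ) (u : Fin p → ℝ), quadForm Sig u = 1 → suppF u ⊆ B →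
        √n * (1 - e1 - e2) ≤ l2 (mulVec' (XPath X Sig a0 e g t) u) ∧
        l2 (mulVec' (XPath X Sig a0 e g t) u) ≤ √n * (1 + e1 + e2) := by
    intro X e g h t u hu huB
    rcases le_total 0 (dot a0 u) with h0 | h0
    · exact h (t, u) ⟨hu, huB, h0⟩
    · have := h (t, -u) ⟨by simpa [quadForm] using hu, by simpa [suppF] using huB,
        by simpa [dot] using h0⟩
      have e : l2 (mulVec' (XPath X Sig a0 e g t) (-u)) = l2 (mulVec' (XPath X Sig a0 e g t) u) := by
        simp [l2, mulVec']
      simpa only [e] using this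
  rcases K.eq_empty_or_nonempty with hKe | hKne
  · exact ⟨∅, MeasurableSet.empty, fun e => by simp, fun X e g _ => hred X e g (by simp [hKe])⟩
  have : Nonempty K := hKne.to_subtype
  -- by continuity in `(t, u)`, a dense sequence of parameters suffices
  obtain ⟨f, hf⟩ := TopologicalSpace.exists_dense_seq K
  refine ⟨{q | ∃ i, l2 (mulVec' (XPath q.1.1 Sig a0 q.1.2 q.2 (f i).1.1) (f i).1.2) <
      √n * (1 - e1 - e2) ∨
      √n * (1 + e1 + e2) < l2 (mulVec' (XPath q.1.1 Sig a0 q.1.2 q.2 (f i).1.1) (f i).1.2)},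
    ?_, fun e => ?_, fun X e g hq => hred X e g ?_⟩
  · simp only [Set.ofPred_exists]
    exact MeasurableSet.iUnion fun i =>
      (measurableSet_lt (measurable_path _ _) measurable_const).union
        (measurableSet_lt measurable_const (measurable_path _ _))
  · exact path_seq hSig ha0 hA e B (fun i => (f i).1.1) (fun i => (f i).1.2)
      (fun i => (f i).2.1) (fun i => (f i).2.2.1) (fun i => (f i).2.2.2) hn he1 he2 he12 hq hqn hbig
  · have hq' : ∀ i, √n * (1 - e1 - e2) ≤ l2 (mulVec' (XPath X Sig a0 e g (f i).1.1) (f i).1.2) ∧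
        l2 (mulVec' (XPath X Sig a0 e g (f i).1.1) (f i).1.2) ≤ √n * (1 + e1 + e2) := by
      intro i
      by_contra hcon
      refine hq ⟨i, ?_⟩
      rw [not_and_or, not_le, not_le] at hcon
      exact hcon
    have hcont : Continuous fun q : K => l2 (mulVec' (XPath X Sig a0 e g q.1.1) q.1.2) :=
      (continuous_path X e g).comp continuous_subtype_val
    intro q hqK
    exact hf.induction_on (p := fun q : K =>
      √n * (1 - e1 - e2) ≤ l2 (mulVec' (XPath X Sig a0 e g q.1.1) q.1.2) ∧
        l2 (mulVec' (XPath X Sig a0 e g q.1.1) q.1.2) ≤ √n * (1 + e1 + e2)) ⟨q, hqK⟩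
      ((isClosed_le continuous_const hcont).inter (isClosed_le hcont continuous_const)) hq'

end cover

/-! ### The isometry event -/

/-- the isometry event `Ω_iso` along the interpolation path has probability
at least `1 − 3e^{−nε₄}`. -/
theorem statement_19
    (Ω : Type) [MeasureSpace Ω] [IsProbabilityMeasure (volume : Measure Ω)]
    (n p m k : ℕ) (ρs η2 η3 e1 e2 e3 e4 σ : ℝ)
    (Sig : Matrix (Fin p) (Fin p) ℝ) (β a0 : Fin p → ℝ)
    (X : Ω → Fin n → Fin p → ℝ) (eps g : Ω → Fin n → ℝ)
    (hn : 0 < n) (hp : 0 < p) (hm : 0 < m) (hk : 0 < k)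
    (hρ : 0 < ρs) (hη2 : 0 < η2) (hη3 : 0 < η3)
    (he1 : 0 < e1) (he2 : 0 < e2) (he3 : 0 < e3) (he4 : 0 < e4) (hσ : 0 < σ)
    (hSig : Sig.PosDef) (ha0 : a0 ≠ 0)
    (hX : GaussDesign n p Sig X)
    (heps : GaussNoise n σ eps)
    (hg : IsoGaussVec n (quadA0 Sig a0)⁻¹ g)
    (hXeps : IndepFun X eps)
    (hgind : IndepFun (fun ω => (X ω, eps ω)) g)
    (he12 : e1 + e2 < 1)
    (he34 : e3 + e4 = e2 ^ 2 / 8)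
    (hsize1 : l0 β + m + k + 1 ≤ p + 1)
    (hsize2 : ((l0 β + m + k + 1 : ℕ) : ℝ) ≤ e1 ^ 2 * n / 2)
    (hbinom : Real.log (Nat.choose (p - l0 β) (m + k)) ≤ e3 * n) :
    1 - 3 * Real.exp (-(n : ℝ) * e4) ≤
      (volume {ω : Ω | ∀ t : ℝ, 0 < t → ∀ u : Fin p → ℝ,
          Real.sqrt (quadForm Sig u) = 1 → (suppF u \ suppF β).card ≤ m + k →
          tauStar e1 e2 ≤ (l2 (mulVec' (XPath (X ω) Sig a0 (eps ω) (g ω) t) u)) ^ 2 / n ∧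
          (l2 (mulVec' (XPath (X ω) Sig a0 (eps ω) (g ω) t) u)) ^ 2 / n
            ≤ tauUp e1 e2}).toReal := by
  have hnR : (0 : ℝ) < n := by exact_mod_cast hn
  set δ : ℝ := 3 * Real.exp (-(n * e2 ^ 2 / 8)) with hδ
  have hδ0 : 0 ≤ δ := by positivity
  -- if the claimed lower bound is not positive there is nothing to prove
  by_cases htriv : 1 ≤ 3 * Real.exp (-(n : ℝ) * e4)
  · exact le_trans (by linarith) ENNReal.toReal_nonneg
  push Not at htriv
  have hbig : δ < 1 := by
    refine lt_of_le_of_lt ?_ htriv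
    have : -(n * e2 ^ 2 / 8) ≤ -(n : ℝ) * e4 := by nlinarith
    exact mul_le_mul_of_nonneg_left (Real.exp_le_exp.2 this) (by norm_num)
  obtain ⟨hXm, A, hA, hXlaw⟩ := hX
  -- the supports in question lie in `S ∪ T` for some `T` of size exactly `m + k` disjoint from `S`
  have hcard : ∀ T ∈ Finset.powersetCard (m + k) (suppF β)ᶜ,
      (suppF β ∪ T).card = l0 β + m + k := by
    intro T hT
    rw [Finset.mem_powersetCard] at hT
    rw [Finset.card_union_of_disjoint, hT.2, l0, add_assoc]
    exact Finset.disjoint_left.2 fun x hx hxT => Finset.mem_compl.1 (hT.1 hxT) hx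
  have hex : ∀ T ∈ Finset.powersetCard (m + k) (suppF β)ᶜ, _ := fun T hT =>
    exists_bad hSig ha0 hA (suppF β ∪ T) hn he1.le he2.le he12
      (by rw [hcard T hT]; omega) (by rw [hcard T hT]; exact hsize2) hbig
  choose! N hNm hNδ hNgood using hex
  have hc : ((C0 Sig a0)⁻¹) ^ 2 = (quadA0 Sig a0)⁻¹ := by rw [inv_pow, C0_sq hSig ha0]
  have hNvol : ∀ T ∈ Finset.powersetCard (m + k) (suppF β)ᶜ,
      volume {ω | ((X ω, eps ω), g ω) ∈ N T} ≤ ENNReal.ofReal δ := fun T hT =>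
    law_bound hc hXm hXlaw heps.1 hg hXeps hgind (hNm T hT) (hNδ T hT)
  set bad : Set Ω := ⋃ T ∈ Finset.powersetCard (m + k) (suppF β)ᶜ,
    {ω | ((X ω, eps ω), g ω) ∈ N T} with hbad
  have hbadm : MeasurableSet bad := Finset.measurableSet_biUnion _ fun T hT =>
    ((hXm.prodMk heps.1).prodMk hg.1) (hNm T hT)
  have hchoose : ((Nat.choose (p - l0 β) (m + k) : ℕ) : ℝ) ≤ Real.exp (e3 * n) := by
    have hpos : (0 : ℝ) < (Nat.choose (p - l0 β) (m + k) : ℕ) := by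
      exact_mod_cast Nat.choose_pos (by omega)
    exact (Real.log_le_iff_le_exp hpos).1 hbinom
  have hbadv : volume bad ≤ ENNReal.ofReal (3 * Real.exp (-(n : ℝ) * e4)) := by
    calc volume bad ≤ ∑ T ∈ Finset.powersetCard (m + k) (suppF β)ᶜ,
          volume {ω | ((X ω, eps ω), g ω) ∈ N T} := measure_biUnion_finset_le _ _
      _ ≤ ∑ T ∈ Finset.powersetCard (m + k) (suppF β)ᶜ, ENNReal.ofReal δ :=
          Finset.sum_le_sum hNvol
      _ = ENNReal.ofReal ((Nat.choose (p - l0 β) (m + k) : ℕ) * δ) := by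
          rw [Finset.sum_const, Finset.card_powersetCard, Finset.card_compl, Fintype.card_fin,
            nsmul_eq_mul, ENNReal.ofReal_mul (Nat.cast_nonneg _), ENNReal.ofReal_natCast, l0]
      _ ≤ _ := by
          refine ENNReal.ofReal_le_ofReal ?_
          calc _ ≤ Real.exp (e3 * n) * δ := mul_le_mul_of_nonneg_right hchoose hδ0
            _ = 3 * (Real.exp (e3 * n) * Real.exp (-(n * e2 ^ 2 / 8))) := by rw [hδ]; ring
            _ = _ := by
              rw [← Real.exp_add]
              congr 2
              linear_combination (n : ℝ) * he34
  have hsub : badᶜ ⊆ {ω : Ω | ∀ t : ℝ, 0 < t → ∀ u : Fin p → ℝ,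
          Real.sqrt (quadForm Sig u) = 1 → (suppF u \ suppF β).card ≤ m + k →
          tauStar e1 e2 ≤ (l2 (mulVec' (XPath (X ω) Sig a0 (eps ω) (g ω) t) u)) ^ 2 / n ∧
          (l2 (mulVec' (XPath (X ω) Sig a0 (eps ω) (g ω) t) u)) ^ 2 / n
            ≤ tauUp e1 e2} := by
    intro ω hω t _ u hu hus
    obtain ⟨T, hsT, hTc, hT⟩ := Finset.exists_subsuperset_card_eq
      (s := suppF u \ suppF β) (t := (suppF β)ᶜ) (n := m + k)
      (fun x hx => Finset.mem_compl.2 (Finset.mem_sdiff.1 hx).2) hus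
      (by rw [Finset.card_compl, Fintype.card_fin]; change m + k ≤ p - l0 β; omega)
    have hTm : T ∈ Finset.powersetCard (m + k) (suppF β)ᶜ := Finset.mem_powersetCard.2 ⟨hTc, hT⟩
    have hωN : ((X ω, eps ω), g ω) ∉ N T := fun h =>
      hω (Set.mem_biUnion (Finset.mem_coe.2 hTm) h)
    obtain ⟨hlo, hhi⟩ := hNgood T hTm (X ω) (eps ω) (g ω) hωN t u
      (Real.sqrt_eq_one.1 hu) (fun x hx => by
        by_cases hxS : x ∈ suppF β
        · exact Finset.mem_union_left _ hxS
        · exact Finset.mem_union_right _ (hsT (Finset.mem_sdiff.2 ⟨hx, hxS⟩)))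
    have hsq : (√(n : ℝ)) ^ 2 = n := Real.sq_sqrt hnR.le
    constructor
    · rw [le_div_iff₀ hnR, tauStar]
      have := pow_le_pow_left₀ (mul_nonneg (Real.sqrt_nonneg _) (by linarith)) hlo 2
      rw [mul_pow, hsq] at this
      linarith
    · rw [div_le_iff₀ hnR, tauUp]
      have := pow_le_pow_left₀ (show 0 ≤ l2 _ from Real.sqrt_nonneg _) hhi 2
      rw [mul_pow, hsq] at this
      linarith
  have hreal : (volume bad).toReal ≤ 3 * Real.exp (-(n : ℝ) * e4) :=
    ENNReal.toReal_le_of_le_ofReal (by positivity) hbadv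
  have hcompl : (volume badᶜ).toReal = 1 - (volume bad).toReal := by
    have := measureReal_compl (μ := (volume : Measure Ω)) hbadm
    simpa [measureReal_def] using this
  calc 1 - 3 * Real.exp (-(n : ℝ) * e4) ≤ (volume badᶜ).toReal := by rw [hcompl]; linarith
    _ ≤ _ := ENNReal.toReal_mono (measure_ne_top _ _) (measure_mono hsub)

end BZ
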